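/- Under Assumption A, the Hausdorff dimension of the attractor and of the self-affine measure satisfy dim_H(Λ) = dim_H(ν) = 1 + log(Nc)/(−log b). -/

import Mathlib

open MeasureTheory Filter Set Topology
open scoped ENNReal

noncomputable section

/-- One triangular affine map `S_i(x,y) = (c x + u_i, d_i x + b y + v_i)`. -/
def Smap {N : ℕ} (c b : ℝ) (u v d : Fin N → ℝ) (i : Fin N) (p : ℝ × ℝ) : ℝ × ℝ :=
  (c * p.1 + u i, d i * p.1 + b * p.2 + v i)

/-- Composition along a finite word: `Sword [i₁,…,iₙ] = S_{i₁} ∘ ⋯ ∘ S_{iₙ}`. -/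
def Sword {N : ℕ} (c b : ℝ) (u v d : Fin N → ℝ) : List (Fin N) → (ℝ × ℝ) → ℝ × ℝ
  | [] => id
  | i :: w => Smap c b u v d i ∘ Sword c b u v d w

/-- The closed unit square `[0,1]²`. -/
def unitSq : Set (ℝ × ℝ) := Set.Icc 0 1 ×ˢ Set.Icc 0 1

/-- The length-`n` prefix of an infinite word, as a list. -/
def prefixWord {N : ℕ} (i : ℕ → Fin N) (n : ℕ) : List (Fin N) :=
  List.ofFn (fun k : Fin n => i k)

/-- The transversality condition: there is `c₃ > 0` such that for every `n` and all
`𝐢, 𝐣` with different first symbols, the projection to the `x`-axis of the intersection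
of the two level-`n` cylinder parallelograms has diameter `< c₃ bⁿ`. -/
def Transversality (N : ℕ) (c b : ℝ) (u v d : Fin N → ℝ) : Prop :=
  ∃ c₃ > (0 : ℝ), ∀ (n : ℕ) (i j : ℕ → Fin N), i 0 ≠ j 0 →
    Metric.diam (Prod.fst '' (Sword c b u v d (prefixWord i n) '' unitSq ∩
      Sword c b u v d (prefixWord j n) '' unitSq)) < c₃ * b ^ n

/-- `μ` is the uniform Bernoulli measure `(1/N,…,1/N)^ℕ` on the symbolic space. -/
def IsUniformBernoulli (N : ℕ) (μ : Measure (ℕ → Fin N)) : Prop :=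
  IsProbabilityMeasure μ ∧ ∀ (n : ℕ) (w : Fin n → Fin N),
    μ {x | ∀ k : Fin n, x (k : ℕ) = w k} = (1 / (N : ℝ≥0∞)) ^ n

/-- `m` is absolutely continuous w.r.t. Lebesgue measure with an `L^q` density. -/
def HasLqDensity (m : Measure ℝ) (q : ℝ) : Prop :=
  ∃ φ : ℝ → ℝ≥0∞, m = MeasureTheory.volume.withDensity φ ∧ (∫⁻ t, φ t ^ q) < ⊤

/-- The Hausdorff dimension of a measure: the infimum of Hausdorff dimensions
of sets of full measure. -/
def measureDimH {X : Type*} [EMetricSpace X] [MeasurableSpace X] (m : Measure X) : ℝ≥0∞ :=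
  ⨅ (A : Set X) (_ : m Aᶜ = 0), dimH A

/-!
The upper bound is a covering argument: for `b < c` the image `S_w([0,1]²)` of the square under a
word of length `n` is a thin strip of length about `cⁿ` and vertical thickness `bⁿ`, so it is cut
into about `(c / b)ⁿ` pieces of diameter about `bⁿ`.

For the lower bound we use the mass distribution principle on a set of sequences of positive
measure. Around `Π 𝐢` take a ball of radius slightly below `bⁿ`. A typical `Π 𝐣` in this ball is
the image of a point not too close to the boundary of the square, so `Π 𝐢` itself lies in the strip
of `𝐣|n`. It follows that the measure of the ball is at most the number of strips of level `n`
through `Π 𝐢` times `N⁻ⁿ (b / c)ⁿ`, up to the subexponential losses caused by an unbounded density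
of `ν_x`. For typical `𝐢` the number of strips through `Π 𝐢` grows subexponentially: among the
words that first differ from `𝐢` at position `k`, at most `(N c)ⁿ⁻ᵏ` strips can meet that of `𝐢`,
by the density of `ν_x`, and transversality bounds the measure of each intersection by
`N⁻ⁿ (b / c)ⁿ⁻ᵏ`; the resulting series converges because `N b < 1`.

Typical points are not too close to the boundary of the square as soon as some strip lies in its
interior. This fails only if a horizontal side is invariant under all the maps, and then
transversality makes the pieces of `Λ` projected to the `x`-axis almost disjoint, which is
incompatible with `N c > 1`.
-/

section Series

lemma tsum_ne_top_of_add_le_mul {f : ℕ → ℝ≥0∞} {k : ℕ} {θ : ℝ≥0∞} (hθ : θ < 1)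
    (hf : ∀ n, f n ≠ ⊤) (h : ∀ n, f (n + k) ≤ θ * f n) : ∑' n, f n ≠ ⊤ := by
  set A := ∑ n ∈ Finset.range k, f n
  have hA : A / (1 - θ) ≠ ⊤ :=
    ENNReal.div_ne_top (ENNReal.sum_ne_top.2 fun n _ => hf n) (tsub_pos_of_lt hθ).ne'
  refine ne_top_of_le_ne_top hA (ENNReal.tsum_le_of_sum_range_le fun m => ?_)
  set s := ∑ n ∈ Finset.range m, f n
  have hs : s ≤ A + θ * s := calc
    s ≤ ∑ n ∈ Finset.range (k + m), f n :=
      Finset.sum_le_sum_of_subset (Finset.range_mono (Nat.le_add_left m k))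
    _ = A + ∑ n ∈ Finset.range m, f (k + n) := Finset.sum_range_add f k m
    _ ≤ A + θ * s := by
      rw [Finset.mul_sum]
      gcongr with n
      exact (Nat.add_comm k n) ▸ h n
  have hs_top : s ≠ ⊤ := ENNReal.sum_ne_top.2 fun n _ => hf n
  rw [ENNReal.le_div_iff_mul_le (.inl (tsub_pos_of_lt hθ).ne')
    (.inl (ENNReal.sub_ne_top ENNReal.one_ne_top)), mul_comm, ENNReal.sub_mul fun _ _ => hs_top,
    one_mul]
  exact tsub_le_iff_right.2 hs

lemma tsum_succ_mul_pow_ne_top {κ : ℝ≥0∞} (hκ : κ < 1) : ∑' n : ℕ, (n + 1) * κ ^ n ≠ ⊤ := by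
  lift κ to NNReal using hκ.ne_top
  have hnorm : ‖(κ : ℝ)‖ < 1 := by
    rw [NNReal.norm_eq]
    exact_mod_cast hκ
  have hsum : Summable fun n : ℕ => ((n + 1) * κ ^ n : NNReal) := by
    rw [← NNReal.summable_coe]
    simpa [add_mul] using (summable_pow_mul_geometric_of_norm_lt_one 1 hnorm).add
      (summable_geometric_of_norm_lt_one hnorm)
  exact_mod_cast ENNReal.tsum_coe_ne_top_iff_summable.2 hsum

lemma sum_pow_sub_le {r : ℝ} (hr0 : 0 ≤ r) (hr1 : r < 1) (n : ℕ) :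
    ∑ k ∈ Finset.range n, r ^ (n - k) ≤ (1 - r)⁻¹ := by
  rw [← Finset.sum_range_reflect, ← tsum_geometric_of_lt_one hr0 hr1]
  calc ∑ k ∈ Finset.range n, r ^ (n - (n - 1 - k))
      ≤ ∑ k ∈ Finset.range n, r ^ k :=
        Finset.sum_le_sum fun k _ => pow_le_pow_of_le_one hr0 hr1.le (by grind)
    _ ≤ ∑' k, r ^ k :=
        (summable_geometric_of_lt_one hr0 hr1).sum_le_tsum _ fun k _ => pow_nonneg hr0 k

end Series

section HausdorffDimension

open scoped NNReal

lemma dimH_le_of_finite_covers {X : Type*} [EMetricSpace X] {ι : ℕ → Type*} [∀ n, Fintype (ι n)]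
    {s : Set X} {t : ∀ n, ι n → Set X} {r : ℕ → ℝ≥0∞} {D : ℝ≥0} {C : ℝ≥0∞}
    (hr : Tendsto r atTop (𝓝 0)) (ht : ∀ n i, Metric.ediam (t n i) ≤ r n)
    (hcov : ∀ n, s ⊆ ⋃ i, t n i) (hC : C ≠ ⊤)
    (hcard : ∀ n, Fintype.card (ι n) * r n ^ (D : ℝ) ≤ C) : dimH s ≤ D := by
  borelize X
  have hsum (n : ℕ) : ∑ i, Metric.ediam (t n i) ^ (D : ℝ) ≤ C := calc
    ∑ i, Metric.ediam (t n i) ^ (D : ℝ) ≤ ∑ _ : ι n, r n ^ (D : ℝ) := by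
      gcongr with i
      exact ht n i
    _ ≤ C := by simpa using hcard n
  refine dimH_le_of_hausdorffMeasure_ne_top (ne_top_of_le_ne_top hC ?_)
  calc μH[D] s ≤ liminf (fun n => ∑ i, Metric.ediam (t n i) ^ (D : ℝ)) atTop :=
        Measure.hausdorffMeasure_le_liminf_sum D s r hr t (.of_forall ht) (.of_forall hcov)
    _ ≤ liminf (fun _ : ℕ => C) atTop := liminf_le_liminf (.of_forall hsum)
    _ = C := liminf_const C

lemma measure_inter_preimage_eq_zero_of_hausdorffMeasure_eq_zero {Ω X : Type*} [MeasurableSpace Ω]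
    [MetricSpace X] [MeasurableSpace X] [BorelSpace X] {μ : Measure Ω} {f : Ω → X}
    (hf : Measurable f) {G : Set Ω} {C : ℝ≥0∞} {r₀ t : ℝ} (hC : C ≠ ⊤) (hr₀ : 0 < r₀)
    (hball : ∀ i ∈ G, ∀ r, 0 ≤ r → r ≤ r₀ →
      μ (G ∩ f ⁻¹' Metric.closedBall (f i) r) ≤ C * ENNReal.ofReal r ^ t)
    {A : Set X} (hA : μH[t] A = 0) : μ (G ∩ f ⁻¹' A) = 0 := by
  set m := (μ.restrict G).map f
  have hm_diam (s : Set X) (hs : Metric.ediam s ≤ ENNReal.ofReal r₀) :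
      m s ≤ C * Metric.ediam s ^ t := by
    have hs_top := ne_top_of_le_ne_top ENNReal.ofReal_ne_top hs
    have hsm : MeasurableSet (closure s) := isClosed_closure.measurableSet
    calc m s ≤ m (closure s) := measure_mono subset_closure
      _ = μ (G ∩ f ⁻¹' closure s) := by
        rw [Measure.map_apply hf hsm, Measure.restrict_apply (hf hsm), inter_comm]
      _ ≤ C * Metric.ediam s ^ t := by
        rcases (G ∩ f ⁻¹' closure s).eq_empty_or_nonempty with he | ⟨i, hiG, his⟩
        · simp [he]
        rw [← ENNReal.ofReal_toReal hs_top]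
        refine (measure_mono (inter_subset_inter_right G (preimage_mono fun x hx => ?_))).trans
          (hball i hiG (Metric.ediam s).toReal ENNReal.toReal_nonneg
            (ENNReal.toReal_le_of_le_ofReal hr₀.le hs))
        rw [Metric.mem_closedBall, dist_edist]
        refine ENNReal.toReal_mono hs_top ?_
        rw [← Metric.ediam_closure s]
        exact Metric.edist_le_ediam_of_mem hx his
  have hm_le : (C + 1)⁻¹ • m ≤ μH[t] := by
    refine Measure.le_hausdorffMeasure t _ (ENNReal.ofReal r₀) (by simpa using hr₀) fun s hs => ?_
    rw [Measure.smul_apply, smul_eq_mul, ENNReal.inv_mul_le_iff (by simp) (by simpa using hC)]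
    exact (hm_diam s hs).trans (by gcongr; exact le_self_add)
  have hmA : m A = 0 := by simpa [hA, hC] using hm_le A
  refine le_antisymm ?_ zero_le
  calc μ (G ∩ f ⁻¹' A) ≤ μ.restrict G (f ⁻¹' A) := by
        rw [inter_comm]
        exact Measure.le_restrict_apply _ _
    _ ≤ m A := Measure.le_map_apply hf.aemeasurable A
    _ = 0 := hmA

lemma le_mul_rpow_of_le_on_geometric {F : ℝ → ℝ≥0∞} (hF : Monotone F) {a ψ t : ℝ} (ha : 0 < a)
    (hψ0 : 0 < ψ) (hψ1 : ψ < 1) (ht : 0 < t) {C : ℝ≥0∞} (hC : C ≠ ⊤) {n₀ : ℕ}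
    (h : ∀ n ≥ n₀, F (a * ψ ^ n) ≤ C * ENNReal.ofReal (ψ ^ n) ^ t) {r : ℝ} (hr0 : 0 ≤ r)
    (hr : r ≤ a * ψ ^ n₀) :
    F r ≤ C * ENNReal.ofReal (a * ψ)⁻¹ ^ t * ENNReal.ofReal r ^ t := by
  rcases hr0.eq_or_lt with rfl | hr0
  · have hlim : Tendsto (fun n : ℕ => C * ENNReal.ofReal (ψ ^ n) ^ t) atTop (𝓝 (C * 0 ^ t)) := by
      refine ENNReal.Tendsto.const_mul (Tendsto.ennrpow_const t ?_) (.inr hC)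
      simpa using ENNReal.tendsto_ofReal (tendsto_pow_atTop_nhds_zero_of_lt_one hψ0.le hψ1)
    rw [ENNReal.zero_rpow_of_pos ht, mul_zero] at hlim
    refine (ge_of_tendsto hlim ?_).trans zero_le
    filter_upwards [eventually_ge_atTop n₀] with n hn
    exact (hF (by positivity)).trans (h n hn)
  · have hra : r / a ≤ ψ ^ n₀ := (div_le_iff₀' ha).2 hr
    obtain ⟨n, hn_lt, hn_le⟩ := exists_nat_pow_near_of_lt_one (div_pos hr0 ha)
      (hra.trans (pow_le_one₀ hψ0.le hψ1.le)) hψ0 hψ1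
    have hn : n₀ ≤ n := by
      by_contra! hlt
      exact (hn_lt.trans_le hra).not_ge (pow_le_pow_of_le_one hψ0.le hψ1.le hlt)
    have hψn : ψ ^ n ≤ (a * ψ)⁻¹ * r := by
      rw [pow_succ, lt_div_iff₀ ha] at hn_lt
      rw [inv_mul_eq_div, le_div_iff₀ (by positivity)]
      linarith
    calc F r ≤ F (a * ψ ^ n) := hF ((div_le_iff₀' ha).1 hn_le)
      _ ≤ C * ENNReal.ofReal (ψ ^ n) ^ t := h n hn
      _ ≤ C * ENNReal.ofReal ((a * ψ)⁻¹ * r) ^ t := by gcongr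
      _ = C * ENNReal.ofReal (a * ψ)⁻¹ ^ t * ENNReal.ofReal r ^ t := by
        rw [ENNReal.ofReal_mul (by positivity), ENNReal.mul_rpow_of_nonneg _ _ ht.le, mul_assoc]

end HausdorffDimension

section Density

lemma withDensity_inter_le_mul {α : Type*} [MeasurableSpace α] {m : Measure α} {φ : α → ℝ≥0∞}
    (hφ : Measurable φ) {A : Set α} (hA : MeasurableSet A) (M : ℝ≥0∞) :
    m.withDensity φ (A ∩ {x | φ x ≤ M}) ≤ M * m A := by
  have hs : MeasurableSet (A ∩ {x | φ x ≤ M}) := hA.inter (measurableSet_le hφ measurable_const)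
  calc m.withDensity φ (A ∩ {x | φ x ≤ M}) = ∫⁻ x in A ∩ {x | φ x ≤ M}, φ x ∂m :=
        withDensity_apply φ hs
    _ ≤ ∫⁻ _ in A ∩ {x | φ x ≤ M}, M ∂m := setLIntegral_mono measurable_const fun x hx => hx.2
    _ = M * m (A ∩ {x | φ x ≤ M}) := setLIntegral_const _ M
    _ ≤ M * m A := by gcongr; exact inter_subset_left

lemma withDensity_le_Lq_mul_rpow {α : Type*} [MeasurableSpace α] {m : Measure α} {φ : α → ℝ≥0∞}
    (hφ : Measurable φ) {p q : ℝ} (hpq : q.HolderConjugate p) {A : Set α} (hA : MeasurableSet A) :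
    m.withDensity φ A ≤ (∫⁻ x, φ x ^ q ∂m) ^ (1 / q) * m A ^ (1 / p) := calc
  m.withDensity φ A = ∫⁻ x, (φ * A.indicator (1 : α → ℝ≥0∞)) x ∂m := by
    rw [withDensity_apply φ hA, ← lintegral_indicator hA]
    congr 1 with x
    by_cases hx : x ∈ A <;> simp [hx]
  _ ≤ (∫⁻ x, φ x ^ q ∂m) ^ (1 / q) * (∫⁻ x, A.indicator (1 : α → ℝ≥0∞) x ^ p ∂m) ^ (1 / p) :=
    ENNReal.lintegral_mul_le_Lp_mul_Lq m hpq hφ.aemeasurable (aemeasurable_one.indicator hA)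
  _ = (∫⁻ x, φ x ^ q ∂m) ^ (1 / q) * m A ^ (1 / p) := by
    have hpow (x : α) : A.indicator (1 : α → ℝ≥0∞) x ^ p = A.indicator 1 x := by
      by_cases hx : x ∈ A <;> simp [hx, hpq.symm.pos]
    simp only [hpow, lintegral_indicator_one hA]

lemma HasLqDensity.exists_measurable {m : Measure ℝ} {q : ℝ} (hm : HasLqDensity m q) (hq : 0 ≤ q) :
    ∃ φ : ℝ → ℝ≥0∞, Measurable φ ∧ m = volume.withDensity φ ∧ ∫⁻ x, φ x ^ q < ⊤ := by
  obtain ⟨φ, rfl, hφ_int⟩ := hm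
  obtain ⟨ψ, hψ, hψ_le, hψ_eq⟩ := exists_measurable_le_withDensity_eq volume φ
  exact ⟨ψ, hψ, hψ_eq.symm, hφ_int.trans_le' <| by gcongr with x; exact hψ_le x⟩

lemma measurable_measure_closedBall {X : Type*} [PseudoMetricSpace X] [SecondCountableTopology X]
    [MeasurableSpace X] [OpensMeasurableSpace X] (m : Measure X) [SFinite m] (r : ℝ) :
    Measurable fun x => m (Metric.closedBall x r) := by
  have hs : MeasurableSet {z : X × X | dist z.2 z.1 ≤ r} :=
    (isClosed_le (by fun_prop) continuous_const).measurableSet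
  exact measurable_measure_prodMk_left hs

section Balls

variable {E : Type*} [NormedAddCommGroup E] [NormedSpace ℝ E] [FiniteDimensional ℝ E]
  [MeasurableSpace E] [BorelSpace E] (lam m : Measure E) [lam.IsAddHaarMeasure] [SFinite m]

lemma lintegral_measure_closedBall (r : ℝ) :
    ∫⁻ x, m (Metric.closedBall x r) ∂lam = lam (Metric.closedBall 0 r) * m univ := by
  have hs : MeasurableSet {z : E × E | dist z.2 z.1 ≤ r} :=
    (isClosed_le (by fun_prop) continuous_const).measurableSet
  calc ∫⁻ x, m (Metric.closedBall x r) ∂lam = lam.prod m {z | dist z.2 z.1 ≤ r} :=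
        (Measure.prod_apply hs).symm
    _ = ∫⁻ y, lam (Metric.closedBall y r) ∂m := by
        rw [Measure.prod_apply_symm hs]
        simp only [preimage_ofPred_eq, Metric.closedBall, dist_comm]
    _ = lam (Metric.closedBall 0 r) * m univ := by
        simp only [Measure.addHaar_closedBall_center, lintegral_const]

lemma measure_closedBall_ge_le_inv [IsProbabilityMeasure m] {r : ℝ} (hr : 0 < r) {M : ℝ≥0∞}
    (hM0 : M ≠ 0) (hM : M ≠ ⊤) :
    lam {x | M * lam (Metric.closedBall 0 r) ≤ m (Metric.closedBall x r)} ≤ M⁻¹ := by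
  have hlam0 : lam (Metric.closedBall 0 r) ≠ 0 := (Metric.measure_closedBall_pos lam 0 hr).ne'
  have hlam : lam (Metric.closedBall 0 r) ≠ ⊤ := measure_closedBall_lt_top.ne
  refine (meas_ge_le_lintegral_div (measurable_measure_closedBall m r).aemeasurable
    (mul_ne_zero hM0 hlam0) (ENNReal.mul_ne_top hM hlam)).trans_eq ?_
  rw [lintegral_measure_closedBall, measure_univ, mul_one, ENNReal.div_eq_inv_mul,
    ENNReal.mul_inv (.inl hM0) (.inl hM), mul_assoc, ENNReal.inv_mul_cancel hlam0 hlam, mul_one]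

end Balls

lemma measure_density_ge_le_inv {α : Type*} [MeasurableSpace α] {m : Measure α} {φ : α → ℝ≥0∞}
    (hφ : Measurable φ) [IsProbabilityMeasure (m.withDensity φ)] {M : ℝ≥0∞} (hM0 : M ≠ 0)
    (hM : M ≠ ⊤) : m {x | M ≤ φ x} ≤ M⁻¹ := by
  have hint : ∫⁻ x, φ x ∂m = 1 := by
    rw [← setLIntegral_univ, ← withDensity_apply φ .univ, measure_univ]
  simpa [hint] using meas_ge_le_lintegral_div (μ := m) hφ.aemeasurable hM0 hM

end Density

section Measure

variable {α ι : Type*} [MeasurableSpace α] {m : Measure α}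

lemma exists_ne_measure_inter_ne_zero_of_lt_sum [Fintype ι] {s : Set α} {t : ι → Set α}
    (ht : ∀ i, MeasurableSet (t i)) (hts : ∀ i, t i ⊆ s) (h : m s < ∑ i, m (t i)) :
    ∃ i j, i ≠ j ∧ m (t i ∩ t j) ≠ 0 := by
  by_contra! hdisj
  refine h.not_ge ?_
  rw [← tsum_fintype (L := .unconditional ι), ← measure_iUnion₀ (fun i j hij => hdisj i j hij)
    fun i => (ht i).nullMeasurableSet]
  exact measure_mono (iUnion_subset hts)

lemma sum_measure_fiber_inter [Fintype ι] [MeasurableSpace ι] [MeasurableSingletonClass ι]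
    {f : α → ι} (hf : Measurable f) (B : Set α) : ∑ k, m (f ⁻¹' {k} ∩ B) = m B := by
  have hfib (k : ι) : MeasurableSet (f ⁻¹' {k}) := hf (measurableSet_singleton k)
  simpa [Measure.restrict_apply, hfib] using
    sum_measure_preimage_singleton (μ := m.restrict B) Finset.univ fun k _ => hfib k

end Measure

section Sequences

variable {α : Type*}

/-- The first `n` terms of a sequence. Cylinder sets of level `n` are the sets
`seqTake n ⁻¹' {w}`. -/
def seqTake (n : ℕ) (i : ℕ → α) : Fin n → α := fun k => i k

/-- The `n`-th iterate `i₀ i₁ i₂ … ↦ iₙ iₙ₊₁ iₙ₊₂ …` of the left shift. -/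
def seqDrop (n : ℕ) (i : ℕ → α) : ℕ → α := fun k => i (n + k)

lemma prefixWord_eq_ofFn_seqTake {N : ℕ} (i : ℕ → Fin N) (n : ℕ) :
    prefixWord i n = List.ofFn (seqTake n i) := rfl

lemma ofFn_seqTake_add (n m : ℕ) (i : ℕ → α) : List.ofFn (seqTake (n + m) i) =
    List.ofFn (seqTake n i) ++ List.ofFn (seqTake m (seqDrop n i)) :=
  List.ofFn_add

lemma seqTake_add_eq_iff {n m : ℕ} {i j : ℕ → α} : seqTake (n + m) i = seqTake (n + m) j ↔
    seqTake n i = seqTake n j ∧ seqTake m (seqDrop n i) = seqTake m (seqDrop n j) := by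
  rw [← List.ofFn_inj, ofFn_seqTake_add, ofFn_seqTake_add,
    List.append_eq_append_iff_of_size_eq_left (by simp only [List.length_ofFn]), List.ofFn_inj,
    List.ofFn_inj]

lemma exists_seqTake_eq_seqDrop_eq {n : ℕ} (w : Fin n → α) (i : ℕ → α) :
    ∃ j, seqTake n j = w ∧ seqDrop n j = i :=
  ⟨fun k => if h : k < n then w ⟨k, h⟩ else i (k - n), by ext; simp [seqTake],
    by ext; simp [seqDrop]⟩

variable [MeasurableSpace α]

lemma measurable_seqTake (n : ℕ) : Measurable (seqTake n : (ℕ → α) → Fin n → α) :=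
  measurable_pi_lambda _ fun _ => measurable_pi_apply _

lemma measurable_seqDrop (n : ℕ) : Measurable (seqDrop n : (ℕ → α) → ℕ → α) :=
  measurable_pi_lambda _ fun _ => measurable_pi_apply _

lemma measure_ext_of_map_seqTake_eq {m m' : Measure (ℕ → α)} [IsFiniteMeasure m]
    (h : ∀ n, m.map (seqTake n) = m'.map (seqTake n)) : m = m' := by
  refine IsProjectiveLimit.unique (P := fun I : Finset ℕ => m.map I.restrict) (fun I => rfl)
    fun I => ?_
  obtain ⟨n, hn⟩ := I.exists_nat_subset_range
  set g : (Fin n → α) → I → α := fun w k => w ⟨k, Finset.mem_range.1 (hn k.2)⟩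
  have hg : Measurable g := measurable_pi_lambda _ fun _ => measurable_pi_apply _
  have hI : I.restrict = g ∘ seqTake n := rfl
  simp only [hI, ← Measure.map_map hg (measurable_seqTake n), h]

end Sequences

section UniformBernoulli

variable {N : ℕ} {μ : Measure (ℕ → Fin N)}

namespace IsUniformBernoulli

lemma measure_seqTake_preimage (hμ : IsUniformBernoulli N μ) {n : ℕ} (w : Fin n → Fin N) :
    μ (seqTake n ⁻¹' {w}) = (1 / (N : ℝ≥0∞)) ^ n := by
  rw [← hμ.2 n w]
  congr 1 with x
  exact funext_iff

lemma map_seqDrop_restrict (hμ : IsUniformBernoulli N μ) {n : ℕ} (w : Fin n → Fin N) :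
    (μ.restrict (seqTake n ⁻¹' {w})).map (seqDrop n) = (1 / (N : ℝ≥0∞)) ^ n • μ := by
  have := hμ.1
  refine measure_ext_of_map_seqTake_eq fun m => Measure.ext_of_singleton fun w' => ?_
  have hw' : MeasurableSet (seqTake m ⁻¹' {w'} : Set (ℕ → Fin N)) :=
    measurable_seqTake m (measurableSet_singleton w')
  rw [Measure.map_apply (measurable_seqTake m) (measurableSet_singleton w'),
    Measure.map_apply (measurable_seqDrop n) hw', Measure.restrict_apply (measurable_seqDrop n hw'),
    Measure.map_smul, Measure.smul_apply,
    Measure.map_apply (measurable_seqTake m) (measurableSet_singleton w'),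
    hμ.measure_seqTake_preimage, smul_eq_mul, ← pow_add]
  obtain ⟨i⟩ := nonempty_of_isProbabilityMeasure μ
  obtain ⟨j', hj', -⟩ := exists_seqTake_eq_seqDrop_eq w' i
  obtain ⟨j, hj, hjj'⟩ := exists_seqTake_eq_seqDrop_eq w j'
  rw [← hμ.measure_seqTake_preimage (seqTake (n + m) j)]
  congr 1 with x
  simp only [mem_inter_iff, mem_preimage, mem_singleton_iff, seqTake_add_eq_iff, hj, hjj', hj',
    and_comm]

lemma measure_seqTake_inter_seqDrop (hμ : IsUniformBernoulli N μ) {n : ℕ} (w : Fin n → Fin N)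
    {B : Set (ℕ → Fin N)} (hB : MeasurableSet B) :
    μ (seqTake n ⁻¹' {w} ∩ seqDrop n ⁻¹' B) = (1 / (N : ℝ≥0∞)) ^ n * μ B := by
  have hn := congr($(hμ.map_seqDrop_restrict w) B)
  rwa [Measure.map_apply (measurable_seqDrop n) hB,
    Measure.restrict_apply (measurable_seqDrop n hB), inter_comm] at hn

lemma natCast_pow_mul_one_div_pow (hμ : IsUniformBernoulli N μ) (n : ℕ) :
    (N : ℝ≥0∞) ^ n * (1 / (N : ℝ≥0∞)) ^ n = 1 := by
  have := hμ.1
  obtain ⟨i⟩ := nonempty_of_isProbabilityMeasure μ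
  rw [← mul_pow, one_div, ENNReal.mul_inv_cancel (by simpa using (i 0).pos.ne') (by simp), one_pow]

lemma one_div_pow_eq_mul_pow_sub (hμ : IsUniformBernoulli N μ) {k n : ℕ} (hk : k ≤ n) :
    (1 / (N : ℝ≥0∞)) ^ k = (1 / (N : ℝ≥0∞)) ^ n * N ^ (n - k) := by
  obtain ⟨m, rfl⟩ := Nat.exists_eq_add_of_le hk
  rw [Nat.add_sub_cancel_left, pow_add, mul_assoc, mul_comm _ ((N : ℝ≥0∞) ^ m),
    hμ.natCast_pow_mul_one_div_pow, mul_one]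

lemma measurePreserving_seqDrop (hμ : IsUniformBernoulli N μ) (n : ℕ) :
    MeasurePreserving (seqDrop n) μ μ := by
  refine ⟨measurable_seqDrop n, Measure.ext fun B hB => ?_⟩
  rw [Measure.map_apply (measurable_seqDrop n) hB, ← sum_measure_fiber_inter (measurable_seqTake n)]
  simp only [hμ.measure_seqTake_inter_seqDrop _ hB, Finset.sum_const, Finset.card_univ,
    Fintype.card_fun, Fintype.card_fin, nsmul_eq_mul, Nat.cast_pow]
  rw [← mul_assoc, hμ.natCast_pow_mul_one_div_pow, one_mul]

end IsUniformBernoulli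

end UniformBernoulli

section Words

variable {N : ℕ} {b c : ℝ} {u v d : Fin N → ℝ}

/-- The lower left entry of the linear part of `S_w`, whose diagonal entries are `c ^ |w|` and
`b ^ |w|`. -/
def shear (c b : ℝ) (d : Fin N → ℝ) : List (Fin N) → ℝ
  | [] => 0
  | a :: w => d a * c ^ w.length + b * shear c b d w

/-- The level-`|w|` parallelogram `S_w([0,1]²)`: for `b < c` it is a long, thin strip. -/
def strip (c b : ℝ) (u v d : Fin N → ℝ) (w : List (Fin N)) : Set (ℝ × ℝ) :=
  Sword c b u v d w '' unitSq

lemma Sword_append (w w' : List (Fin N)) :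
    Sword c b u v d (w ++ w') = Sword c b u v d w ∘ Sword c b u v d w' := by
  induction w with
  | nil => rfl
  | cons a w ih => simp only [List.cons_append, Sword, ih, Function.comp_assoc]

lemma Sword_apply (w : List (Fin N)) (p : ℝ × ℝ) :
    Sword c b u v d w p = (c ^ w.length * p.1 + (Sword c b u v d w 0).1,
      shear c b d w * p.1 + b ^ w.length * p.2 + (Sword c b u v d w 0).2) := by
  induction w with
  | nil => simp [Sword, shear]
  | cons a w ih =>
    simp only [Sword, Function.comp_apply, Smap, shear, List.length_cons]
    rw [ih]
    ext <;> dsimp only <;> ring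

lemma Sword_fst_sub (w : List (Fin N)) (p q : ℝ × ℝ) :
    (Sword c b u v d w p).1 - (Sword c b u v d w q).1 = c ^ w.length * (p.1 - q.1) := by
  rw [Sword_apply, Sword_apply w q]
  ring

lemma Sword_snd_sub (w : List (Fin N)) (p q : ℝ × ℝ) :
    (Sword c b u v d w p).2 - (Sword c b u v d w q).2 =
      shear c b d w * (p.1 - q.1) + b ^ w.length * (p.2 - q.2) := by
  rw [Sword_apply, Sword_apply w q]
  ring

lemma continuous_Sword (w : List (Fin N)) : Continuous (Sword c b u v d w) := by
  have h : Continuous fun p : ℝ × ℝ => (c ^ w.length * p.1 + (Sword c b u v d w 0).1,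
    shear c b d w * p.1 + b ^ w.length * p.2 + (Sword c b u v d w 0).2) := by fun_prop
  exact h.congr fun p => (Sword_apply w p).symm

lemma Sword_injective (hb : b ≠ 0) (hc : c ≠ 0) (w : List (Fin N)) :
    Function.Injective (Sword c b u v d w) := by
  intro p q hpq
  have hfst : p.1 = q.1 := by
    have h := Sword_fst_sub (c := c) (b := b) (u := u) (v := v) (d := d) w p q
    rw [hpq, sub_self, eq_comm, mul_eq_zero, or_iff_right (pow_ne_zero _ hc)] at h
    exact sub_eq_zero.1 h
  have hsnd : p.2 = q.2 := by
    have h := Sword_snd_sub (c := c) (b := b) (u := u) (v := v) (d := d) w p q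
    rw [hpq, hfst, sub_self, sub_self, mul_zero, zero_add, eq_comm, mul_eq_zero,
      or_iff_right (pow_ne_zero _ hb)] at h
    exact sub_eq_zero.1 h
  exact Prod.ext hfst hsnd

lemma exists_abs_shear_le (hb : 0 ≤ b) (hbc : b < c) (d : Fin N → ℝ) :
    ∃ K > 0, ∀ w, |shear c b d w| ≤ K * c ^ w.length := by
  have hcb : 0 < c - b := sub_pos.2 hbc
  have hc : 0 ≤ c := hb.trans hbc.le
  set D : ℝ := ∑ a, |d a| + 1
  have hD (a : Fin N) : |d a| ≤ D := (Finset.single_le_sum (f := fun a => |d a|)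
    (fun _ _ => abs_nonneg _) (Finset.mem_univ a)).trans (le_add_of_nonneg_right zero_le_one)
  have hD0 : 0 < D := by positivity
  refine ⟨D / (c - b), by positivity, fun w => ?_⟩
  set K := D / (c - b) with hK
  induction w with
  | nil => simpa [shear] using (by positivity : 0 ≤ K)
  | cons a w ih =>
    calc |shear c b d (a :: w)| ≤ |d a| * c ^ w.length + b * |shear c b d w| := by
          refine (abs_add_le _ _).trans_eq ?_
          rw [abs_mul, abs_mul, abs_of_nonneg hb, abs_of_nonneg (pow_nonneg hc _)]
      _ ≤ D * c ^ w.length + b * (K * c ^ w.length) := by gcongr; exact hD a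
      _ = K * c ^ (a :: w).length := by rw [List.length_cons, hK]; field_simp; ring

lemma abs_sub_le_one_of_mem_unitSq {p q : ℝ × ℝ} (hp : p ∈ unitSq) (hq : q ∈ unitSq) :
    |p.1 - q.1| ≤ 1 ∧ |p.2 - q.2| ≤ 1 :=
  ⟨(abs_sub_le_of_le_of_le hp.1.1 hp.1.2 hq.1.1 hq.1.2).trans_eq (sub_zero 1),
    (abs_sub_le_of_le_of_le hp.2.1 hp.2.2 hq.2.1 hq.2.2).trans_eq (sub_zero 1)⟩

lemma zero_mem_unitSq : (0 : ℝ × ℝ) ∈ unitSq :=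
  ⟨⟨le_rfl, zero_le_one⟩, le_rfl, zero_le_one⟩

lemma isCompact_unitSq : IsCompact unitSq := isCompact_Icc.prod isCompact_Icc

lemma isCompact_strip (w : List (Fin N)) : IsCompact (strip c b u v d w) :=
  isCompact_unitSq.image (continuous_Sword w)

lemma abs_fst_sub_le_of_mem_strip (hc : 0 ≤ c) {w : List (Fin N)} {z z' : ℝ × ℝ}
    (hz : z ∈ strip c b u v d w) (hz' : z' ∈ strip c b u v d w) : |z.1 - z'.1| ≤ c ^ w.length := by
  obtain ⟨p, hp, rfl⟩ := hz
  obtain ⟨q, hq, rfl⟩ := hz'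
  rw [Sword_fst_sub, abs_mul, abs_of_nonneg (pow_nonneg hc _)]
  exact mul_le_of_le_one_right (pow_nonneg hc _) (abs_sub_le_one_of_mem_unitSq hp hq).1

lemma dist_Sword_le (hb : 0 ≤ b) (hc : 0 ≤ c) {K : ℝ} (hK0 : 0 ≤ K) {w : List (Fin N)}
    (hK : |shear c b d w| ≤ K * c ^ w.length) {p q : ℝ × ℝ} (hp : p ∈ unitSq) (hq : q ∈ unitSq) :
    dist (Sword c b u v d w p) (Sword c b u v d w q) ≤
      (K + 1) * (c ^ w.length * |p.1 - q.1|) + b ^ w.length := by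
  have hx : 0 ≤ c ^ w.length * |p.1 - q.1| := by positivity
  have hbw : 0 ≤ b ^ w.length := by positivity
  have hKx := mul_nonneg hK0 hx
  rw [Prod.dist_eq, Real.dist_eq, Real.dist_eq, Sword_fst_sub, Sword_snd_sub, abs_mul,
    abs_of_nonneg (pow_nonneg hc _)]
  refine max_le (by linarith) ?_
  calc |shear c b d w * (p.1 - q.1) + b ^ w.length * (p.2 - q.2)|
      ≤ |shear c b d w| * |p.1 - q.1| + b ^ w.length * |p.2 - q.2| := by
        refine (abs_add_le _ _).trans_eq ?_
        rw [abs_mul, abs_mul, abs_of_nonneg hbw]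
    _ ≤ K * c ^ w.length * |p.1 - q.1| + b ^ w.length * 1 := by
        gcongr
        exact (abs_sub_le_one_of_mem_unitSq hp hq).2
    _ ≤ _ := by linarith

lemma exists_tendsto_zero_dist_Sword_le (hb : 0 ≤ b) (hbc : b < c) (hc : c < 1)
    (u v d : Fin N → ℝ) :
    ∃ ρ : ℕ → ℝ, Tendsto ρ atTop (𝓝 0) ∧ ∀ w, ∀ p ∈ unitSq, ∀ q ∈ unitSq,
      dist (Sword c b u v d w p) (Sword c b u v d w q) ≤ ρ w.length := by
  have hc0 : 0 ≤ c := hb.trans hbc.le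
  obtain ⟨K, hK0, hK⟩ := exists_abs_shear_le hb hbc d
  refine ⟨fun n => (K + 1) * (c ^ n * 1) + b ^ n, ?_, fun w p hp q hq => ?_⟩
  · simpa using (((tendsto_pow_atTop_nhds_zero_of_lt_one hc0 hc).mul_const 1).const_mul (K + 1)).add
      (tendsto_pow_atTop_nhds_zero_of_lt_one hb (hbc.trans hc))
  · refine (dist_Sword_le hb hc0 hK0.le (hK w) hp hq).trans ?_
    have hx := mul_le_mul_of_nonneg_left (abs_sub_le_one_of_mem_unitSq hp hq).1
      (pow_nonneg hc0 w.length)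
    dsimp only
    gcongr

lemma exists_Sword_eq_and_dist_le (hb : 0 < b) (hbc : b ≤ c) {K : ℝ} (hK0 : 0 ≤ K)
    {w : List (Fin N)} (hK : |shear c b d w| ≤ K * c ^ w.length) (p z : ℝ × ℝ) :
    ∃ q, Sword c b u v d w q = z ∧
      b ^ w.length * dist q p ≤ (1 + K) * dist z (Sword c b u v d w p) := by
  have hc : 0 < c ^ w.length := pow_pos (hb.trans_le hbc) _
  have hb' : 0 < b ^ w.length := pow_pos hb _
  set z₀ := Sword c b u v d w p with hz₀
  set x := (z.1 - z₀.1) / c ^ w.length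
  set y := (z.2 - z₀.2 - shear c b d w * x) / b ^ w.length
  have hcx : c ^ w.length * x = z.1 - z₀.1 := mul_div_cancel₀ _ hc.ne'
  have hby : b ^ w.length * y = z.2 - z₀.2 - shear c b d w * x := mul_div_cancel₀ _ hb'.ne'
  have hq₁ := Sword_fst_sub (c := c) (b := b) (u := u) (v := v) (d := d) w (p + (x, y)) p
  have hq₂ := Sword_snd_sub (c := c) (b := b) (u := u) (v := v) (d := d) w (p + (x, y)) p
  simp only [Prod.fst_add, Prod.snd_add, add_sub_cancel_left, hcx, hby, ← hz₀] at hq₁ hq₂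
  refine ⟨p + (x, y), Prod.ext (by linarith) (by linarith), ?_⟩
  have hd₁ : |z.1 - z₀.1| ≤ dist z z₀ := (le_max_left _ _ : dist z.1 z₀.1 ≤ _)
  have hd₂ : |z.2 - z₀.2| ≤ dist z z₀ := (le_max_right _ _ : dist z.2 z₀.2 ≤ _)
  have hcx' : c ^ w.length * |x| ≤ dist z z₀ := by
    rwa [← abs_of_pos hc, ← abs_mul, hcx]
  have hbx : b ^ w.length * |x| ≤ dist z z₀ := (by gcongr : _ ≤ c ^ w.length * |x|).trans hcx'
  have hby' : b ^ w.length * |y| ≤ dist z z₀ + K * dist z z₀ := by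
    calc b ^ w.length * |y| = |z.2 - z₀.2 - shear c b d w * x| := by
          rw [← hby, abs_mul, abs_of_pos hb']
      _ ≤ |z.2 - z₀.2| + |shear c b d w| * |x| := by rw [← abs_mul]; exact abs_sub _ _
      _ ≤ dist z z₀ + K * c ^ w.length * |x| := by gcongr
      _ ≤ _ := by rw [mul_assoc]; gcongr
  have hKd := mul_nonneg hK0 (dist_nonneg (x := z) (y := z₀))
  rw [dist_eq_norm, add_sub_cancel_left, Prod.norm_def, Real.norm_eq_abs, Real.norm_eq_abs,
    mul_max_of_nonneg _ _ hb'.le]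
  exact max_le (by linarith) (by linarith)

/-- The square `[h, 1 - h]²` of points of `[0,1]²` at depth at least `h`. -/
def innerSq (h : ℝ) : Set (ℝ × ℝ) := Icc h (1 - h) ×ˢ Icc h (1 - h)

lemma isClosed_innerSq (h : ℝ) : IsClosed (innerSq h) := isClosed_Icc.prod isClosed_Icc

lemma innerSq_subset_innerSq {h h' : ℝ} (hh : h ≤ h') : innerSq h' ⊆ innerSq h :=
  prod_mono (Icc_subset_Icc hh (by linarith)) (Icc_subset_Icc hh (by linarith))

lemma innerSq_zero : innerSq 0 = unitSq := by simp only [innerSq, unitSq, sub_zero]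

lemma mem_innerSq_of_dist_le {h h' : ℝ} {p q : ℝ × ℝ} (hp : p ∈ innerSq (h + h'))
    (hq : dist q p ≤ h) : q ∈ innerSq h' := by
  rw [Prod.dist_eq, max_le_iff, Real.dist_eq, Real.dist_eq, abs_le, abs_le] at hq
  obtain ⟨⟨hp₁, hp₂⟩, hp₃, hp₄⟩ := hp
  exact ⟨⟨by linarith, by linarith⟩, by linarith, by linarith⟩

lemma mem_strip_of_dist_le_of_mem_innerSq (hb : 0 < b) (hbc : b ≤ c) {K : ℝ} (hK0 : 0 ≤ K)
    {w : List (Fin N)} (hK : |shear c b d w| ≤ K * c ^ w.length) {h : ℝ} {p z : ℝ × ℝ}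
    (hp : p ∈ innerSq h) (hz : (1 + K) * dist z (Sword c b u v d w p) ≤ h * b ^ w.length) :
    z ∈ strip c b u v d w := by
  obtain ⟨q, rfl, hq⟩ := exists_Sword_eq_and_dist_le (u := u) (v := v) hb hbc hK0 hK p z
  rw [← add_zero h] at hp
  refine ⟨q, innerSq_zero ▸ mem_innerSq_of_dist_le hp ?_, rfl⟩
  exact le_of_mul_le_mul_left (by linarith) (pow_pos hb w.length)

end Words

section Coding

variable {N : ℕ} {b c : ℝ} {u v d : Fin N → ℝ} {Pi : (ℕ → Fin N) → ℝ × ℝ}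

/-- `Pi` is the natural projection of an iterated function system of triangular maps preserving
the unit square. -/
structure IsNaturalProjection (c b : ℝ) (u v d : Fin N → ℝ) (Pi : (ℕ → Fin N) → ℝ × ℝ) :
    Prop where
  mapsTo_Smap : ∀ a, MapsTo (Smap c b u v d a) unitSq unitSq
  tendsto_Sword : ∀ i, Tendsto (fun n => Sword c b u v d (prefixWord i n) 0) atTop (𝓝 (Pi i))

namespace IsNaturalProjection

lemma mapsTo_Sword (hPi : IsNaturalProjection c b u v d Pi) (w : List (Fin N)) :
    MapsTo (Sword c b u v d w) unitSq unitSq := by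
  induction w with
  | nil => exact mapsTo_id _
  | cons a w ih => exact (hPi.mapsTo_Smap a).comp ih

lemma mem_unitSq (hPi : IsNaturalProjection c b u v d Pi) (i : ℕ → Fin N) : Pi i ∈ unitSq :=
  isCompact_unitSq.isClosed.mem_of_tendsto (hPi.tendsto_Sword i) <|
    Eventually.of_forall fun _ => hPi.mapsTo_Sword _ zero_mem_unitSq

lemma eq_Sword (hPi : IsNaturalProjection c b u v d Pi) (n : ℕ) (i : ℕ → Fin N) :
    Pi i = Sword c b u v d (List.ofFn (seqTake n i)) (Pi (seqDrop n i)) := by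
  refine tendsto_nhds_unique ((hPi.tendsto_Sword i).comp (tendsto_add_atTop_nat n)) <|
    (((continuous_Sword _).tendsto _).comp (hPi.tendsto_Sword (seqDrop n i))).congr fun m => ?_
  simp only [Function.comp_apply, prefixWord_eq_ofFn_seqTake]
  rw [add_comm m n, ofFn_seqTake_add, Sword_append]
  rfl

lemma fst_eq (hPi : IsNaturalProjection c b u v d Pi) (n : ℕ) (i : ℕ → Fin N) :
    (Pi i).1 = c ^ n * (Pi (seqDrop n i)).1 +
      (Sword c b u v d (List.ofFn (seqTake n i)) 0).1 := by
  rw [hPi.eq_Sword n i, Sword_apply, List.length_ofFn]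

lemma mem_strip (hPi : IsNaturalProjection c b u v d Pi) (n : ℕ) (i : ℕ → Fin N) :
    Pi i ∈ strip c b u v d (List.ofFn (seqTake n i)) :=
  ⟨_, hPi.mem_unitSq (seqDrop n i), (hPi.eq_Sword n i).symm⟩

lemma continuous (hPi : IsNaturalProjection c b u v d Pi) (hb : 0 ≤ b) (hbc : b < c)
    (hc : c < 1) : Continuous Pi := by
  obtain ⟨ρ, hρ, hdist⟩ := exists_tendsto_zero_dist_Sword_le hb hbc hc u v d
  have hunif : TendstoUniformly (fun n i => Sword c b u v d (prefixWord i n) 0) Pi atTop := by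
    refine Metric.tendstoUniformly_iff.2 fun ε hε => ?_
    filter_upwards [hρ.eventually_lt_const hε] with n hn i
    rw [hPi.eq_Sword n i, prefixWord_eq_ofFn_seqTake]
    refine (hdist _ _ (hPi.mem_unitSq (seqDrop n i)) _ zero_mem_unitSq).trans_lt ?_
    rwa [List.length_ofFn]
  have hword (n : ℕ) : Continuous fun i : ℕ → Fin N => Sword c b u v d (prefixWord i n) 0 :=
    (continuous_of_discreteTopology (f := fun w : Fin n → Fin N =>
      Sword c b u v d (List.ofFn w) 0)).comp (continuous_pi fun k => continuous_apply (k : ℕ))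
  exact hunif.continuous (Frequently.of_forall hword)

lemma measurable (hPi : IsNaturalProjection c b u v d Pi) : Measurable Pi :=
  measurable_of_tendsto_metrizable
    (fun n => (measurable_of_finite fun w : Fin n → Fin N =>
      Sword c b u v d (List.ofFn w) 0).comp (measurable_seqTake n))
    (tendsto_pi_nhds.2 hPi.tendsto_Sword)

lemma mapsTo_Smap_innerSq (hPi : IsNaturalProjection c b u v d Pi) (hb : 0 ≤ b) (hbc : b ≤ c)
    (a : Fin N) {h : ℝ} (h0 : 0 ≤ h) :
    MapsTo (Smap c b u v d a) (unitSq ∩ innerSq h) (innerSq (b * h)) := by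
  rintro p ⟨hp, ⟨hx₀, hx₁⟩, hy₀, hy₁⟩
  have hvertex (x y : ℝ) (hx : x ∈ Icc (0 : ℝ) 1) (hy : y ∈ Icc (0 : ℝ) 1) :=
    hPi.mapsTo_Smap a (show (x, y) ∈ unitSq from ⟨hx, hy⟩)
  obtain ⟨⟨hu, -⟩, -⟩ := hvertex 0 0 (by simp) (by simp)
  obtain ⟨⟨-, hcu⟩, -⟩ := hvertex 1 0 (by simp) (by simp)
  obtain ⟨-, hbot, -⟩ := hvertex p.1 0 hp.1 (by simp)
  obtain ⟨-, -, htop⟩ := hvertex p.1 1 hp.1 (by simp)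
  simp only [Smap] at hu hcu hbot htop
  refine ⟨⟨?_, ?_⟩, ?_, ?_⟩ <;> simp only [Smap] <;> nlinarith

lemma mapsTo_Sword_innerSq (hPi : IsNaturalProjection c b u v d Pi) (hb : 0 ≤ b) (hbc : b ≤ c)
    (w : List (Fin N)) {h : ℝ} (h0 : 0 ≤ h) :
    MapsTo (Sword c b u v d w) (unitSq ∩ innerSq h) (innerSq (b ^ w.length * h)) := by
  induction w with
  | nil => simpa [Sword] using (mapsTo_id (innerSq h)).mono_left inter_subset_right
  | cons a w ih =>
    intro p hp
    rw [List.length_cons, pow_succ', mul_assoc]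
    exact hPi.mapsTo_Smap_innerSq hb hbc a (mul_nonneg (pow_nonneg hb _) h0)
      ⟨hPi.mapsTo_Sword w hp.1, ih hp⟩

end IsNaturalProjection

/-- `Transversality` with the constant `c₃` made explicit. -/
def TransversalWith (c b : ℝ) (u v d : Fin N → ℝ) (c₃ : ℝ) : Prop :=
  ∀ (n : ℕ) (i j : ℕ → Fin N), i 0 ≠ j 0 →
    Metric.diam (Prod.fst '' (strip c b u v d (List.ofFn (seqTake n i)) ∩
      strip c b u v d (List.ofFn (seqTake n j)))) < c₃ * b ^ n

lemma TransversalWith.abs_fst_sub_le {c₃ : ℝ} (htr : TransversalWith c b u v d c₃) {n : ℕ}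
    {i j : ℕ → Fin N} (hij : i 0 ≠ j 0) {z z' : ℝ × ℝ}
    (hz : z ∈ strip c b u v d (List.ofFn (seqTake n i)) ∩
      strip c b u v d (List.ofFn (seqTake n j)))
    (hz' : z' ∈ strip c b u v d (List.ofFn (seqTake n i)) ∩
      strip c b u v d (List.ofFn (seqTake n j))) : |z.1 - z'.1| ≤ c₃ * b ^ n := by
  have hbdd : Bornology.IsBounded (Prod.fst '' (strip c b u v d (List.ofFn (seqTake n i)) ∩
      strip c b u v d (List.ofFn (seqTake n j)))) :=
    ((isCompact_strip _).image continuous_fst).isBounded.subset (image_mono inter_subset_left)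
  exact (Metric.dist_le_diam_of_mem hbdd (mem_image_of_mem _ hz) (mem_image_of_mem _ hz')).trans
    (htr n i j hij).le

lemma TransversalWith.abs_fst_sub_le_of_seqTake_eq {c₃ : ℝ} (htr : TransversalWith c b u v d c₃)
    (hb : b ≠ 0) (hc : 0 < c) {k m : ℕ} {i j : ℕ → Fin N} (hij : seqTake k i = seqTake k j)
    (hk : i k ≠ j k) {z z' : ℝ × ℝ}
    (hz : z ∈ strip c b u v d (List.ofFn (seqTake (k + m) i)) ∩
      strip c b u v d (List.ofFn (seqTake (k + m) j)))
    (hz' : z' ∈ strip c b u v d (List.ofFn (seqTake (k + m) i)) ∩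
      strip c b u v d (List.ofFn (seqTake (k + m) j))) :
    |z.1 - z'.1| ≤ c ^ k * (c₃ * b ^ m) := by
  have hinter : strip c b u v d (List.ofFn (seqTake (k + m) i)) ∩
      strip c b u v d (List.ofFn (seqTake (k + m) j)) =
      Sword c b u v d (List.ofFn (seqTake k i)) ''
        (strip c b u v d (List.ofFn (seqTake m (seqDrop k i))) ∩
          strip c b u v d (List.ofFn (seqTake m (seqDrop k j)))) := by
    simp only [strip, ofFn_seqTake_add, Sword_append, image_comp, ← hij,
      image_inter (Sword_injective hb hc.ne' _)]
  rw [hinter] at hz hz'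
  obtain ⟨p, hp, rfl⟩ := hz
  obtain ⟨p', hp', rfl⟩ := hz'
  rw [Sword_fst_sub, abs_mul, abs_of_pos (pow_pos hc _), List.length_ofFn]
  gcongr
  exact htr.abs_fst_sub_le hk hp hp'

end Coding

section UpperBound

variable {N : ℕ} {b c : ℝ} {u v d : Fin N → ℝ} {Pi : (ℕ → Fin N) → ℝ × ℝ}

/-- The affinity dimension `1 + log (N c) / (-log b)` of the system. -/
def affinityDim (N : ℕ) (b c : ℝ) : ℝ := 1 + Real.log (N * c) / (-Real.log b)

lemma affinityDim_nonneg (hb0 : 0 ≤ b) (hb1 : b ≤ 1) (hNc : 1 ≤ N * c) :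
    0 ≤ affinityDim N b c :=
  add_nonneg zero_le_one <| div_nonneg (Real.log_nonneg hNc) <|
    neg_nonneg.2 (Real.log_nonpos hb0 hb1)

lemma rpow_affinityDim_mul (hb0 : 0 < b) (hb1 : b < 1) (hNc : 0 < N * c) :
    b ^ affinityDim N b c * (N * c) = b := by
  have hlog : Real.log b ≠ 0 := (Real.log_neg hb0 hb1).ne
  have hexp : Real.log b * (Real.log (N * c) / (-Real.log b)) = -Real.log (N * c) := by
    field_simp
  rw [affinityDim, Real.rpow_add hb0, Real.rpow_one, Real.rpow_def_of_pos hb0, hexp, Real.exp_neg,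
    Real.exp_log hNc, mul_assoc, inv_mul_cancel₀ hNc.ne', mul_one]

lemma abs_sub_mul_le_one_of_natFloor_eq {x y Q : ℝ} (hx : 0 ≤ x) (hy : 0 ≤ y) (hQ : 0 ≤ Q)
    (h : ⌊x * Q⌋₊ = ⌊y * Q⌋₊) : |x - y| * Q ≤ 1 := by
  have hfloor : ⌊x * Q⌋ = ⌊y * Q⌋ := by
    rw [← Int.natCast_floor_eq_floor (by positivity), h, Int.natCast_floor_eq_floor (by positivity)]
  rw [← abs_of_nonneg hQ, ← abs_mul, sub_mul]
  simpa only [abs_of_nonneg hQ] using (Int.abs_sub_lt_one_of_floor_eq_floor hfloor).le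

/-- The part of the strip of `w` coming from the points of `[0,1]²` whose abscissa lies in
`[q / Q, (q + 1) / Q)`. -/
def stripPiece (c b : ℝ) (u v d : Fin N → ℝ) (w : List (Fin N)) (Q q : ℕ) : Set (ℝ × ℝ) :=
  Sword c b u v d w '' {p | p ∈ unitSq ∧ ⌊p.1 * Q⌋₊ = q}

lemma iUnion_stripPiece (w : List (Fin N)) (Q : ℕ) :
    ⋃ q : Fin (Q + 1), stripPiece c b u v d w Q q = strip c b u v d w := by
  refine subset_antisymm (iUnion_subset fun q => image_mono fun p hp => hp.1) ?_
  rintro _ ⟨p, hp, rfl⟩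
  have hfloor : ⌊p.1 * Q⌋₊ < Q + 1 :=
    Nat.lt_succ_of_le (Nat.floor_le_of_le (mul_le_of_le_one_left Q.cast_nonneg hp.1.2))
  exact mem_iUnion.2 ⟨⟨_, hfloor⟩, p, ⟨hp, rfl⟩, rfl⟩

lemma ediam_stripPiece_le (hb : 0 ≤ b) (hc : 0 ≤ c) {K : ℝ} (hK0 : 0 ≤ K) {w : List (Fin N)}
    (hK : |shear c b d w| ≤ K * c ^ w.length) {Q : ℕ} (hQ : c ^ w.length ≤ b ^ w.length * Q)
    (q : ℕ) :
    Metric.ediam (stripPiece c b u v d w Q q) ≤ ENNReal.ofReal ((K + 2) * b ^ w.length) := by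
  refine Metric.ediam_le ?_
  rintro _ ⟨p, ⟨hp, hpq⟩, rfl⟩ _ ⟨p', ⟨hp', hpq'⟩, rfl⟩
  rw [edist_dist]
  refine ENNReal.ofReal_le_ofReal ((dist_Sword_le hb hc hK0 hK hp hp').trans ?_)
  have hx : c ^ w.length * |p.1 - p'.1| ≤ b ^ w.length := by
    calc c ^ w.length * |p.1 - p'.1| ≤ b ^ w.length * Q * |p.1 - p'.1| := by gcongr
      _ = b ^ w.length * (|p.1 - p'.1| * Q) := by ring
      _ ≤ b ^ w.length := mul_le_of_le_one_right (by positivity) <|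
        abs_sub_mul_le_one_of_natFloor_eq hp.1.1 hp'.1.1 Q.cast_nonneg (hpq.trans hpq'.symm)
  calc (K + 1) * (c ^ w.length * |p.1 - p'.1|) + b ^ w.length
      ≤ (K + 1) * b ^ w.length + b ^ w.length := by gcongr
    _ = (K + 2) * b ^ w.length := by ring

lemma card_mul_rpow_affinityDim_le (hb0 : 0 < b) (hb1 : b < 1) (hbc : b ≤ c) (hNc : 0 < N * c)
    {R : ℝ} (hR : 0 ≤ R) (n : ℕ) :
    (N : ℝ) ^ n * (⌈(c / b) ^ n⌉₊ + 1) * (R * b ^ n) ^ affinityDim N b c ≤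
      3 * R ^ affinityDim N b c := by
  set s := affinityDim N b c
  have hcb : 1 ≤ (c / b) ^ n := one_le_pow₀ ((one_le_div hb0).2 hbc)
  have hceil : (⌈(c / b) ^ n⌉₊ : ℝ) + 1 ≤ 3 * (c / b) ^ n := by
    linarith [Nat.ceil_lt_add_one (zero_le_one.trans hcb)]
  have hone : (N : ℝ) * (c / b) * b ^ s = 1 := by
    rw [mul_div_assoc', div_mul_eq_mul_div, div_eq_one_iff_eq hb0.ne', mul_comm]
    exact rpow_affinityDim_mul hb0 hb1 hNc
  have hpow : (R * b ^ n) ^ s = R ^ s * (b ^ s) ^ n := by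
    rw [Real.mul_rpow hR (by positivity), Real.rpow_pow_comm hb0.le]
  calc (N : ℝ) ^ n * (⌈(c / b) ^ n⌉₊ + 1) * (R * b ^ n) ^ s
      ≤ (N : ℝ) ^ n * (3 * (c / b) ^ n) * (R * b ^ n) ^ s := by gcongr
    _ = 3 * R ^ s * (N * (c / b) * b ^ s) ^ n := by rw [hpow, mul_pow, mul_pow]; ring
    _ = 3 * R ^ s := by rw [hone, one_pow, mul_one]

lemma IsNaturalProjection.dimH_range_le (hPi : IsNaturalProjection c b u v d Pi) (hb0 : 0 < b)
    (hb1 : b < 1) (hbc : b < c) (hNc : 1 ≤ N * c) :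
    dimH (range Pi) ≤ ENNReal.ofReal (affinityDim N b c) := by
  obtain ⟨K, hK0, hK⟩ := exists_abs_shear_le hb0.le hbc d
  set Q : ℕ → ℕ := fun n => ⌈(c / b) ^ n⌉₊
  have hQ (n : ℕ) : c ^ n ≤ b ^ n * Q n := by
    rw [← div_le_iff₀' (pow_pos hb0 n), ← div_pow]
    exact Nat.le_ceil _
  refine dimH_le_of_finite_covers (ι := fun n => (Fin n → Fin N) × Fin (Q n + 1))
    (t := fun n x => stripPiece c b u v d (List.ofFn x.1) (Q n) x.2)
    (r := fun n => ENNReal.ofReal ((K + 2) * b ^ n))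
    (C := ENNReal.ofReal (3 * (K + 2) ^ affinityDim N b c)) ?_ ?_ ?_ ENNReal.ofReal_ne_top ?_
  · simpa using ENNReal.tendsto_ofReal
      ((tendsto_pow_atTop_nhds_zero_of_lt_one hb0.le hb1).const_mul (K + 2))
  · intro n x
    simpa only [List.length_ofFn] using ediam_stripPiece_le hb0.le (hb0.trans hbc).le hK0.le
      (hK (List.ofFn x.1)) (by simpa only [List.length_ofFn] using hQ n) x.2
  · rintro n _ ⟨i, rfl⟩
    obtain ⟨q, hq⟩ := mem_iUnion.1 ((iUnion_stripPiece _ (Q n)).ge (hPi.mem_strip n i))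
    exact mem_iUnion.2 ⟨(_, q), hq⟩
  · intro n
    have hs := affinityDim_nonneg hb0.le hb1.le hNc
    rw [Real.coe_toNNReal _ hs]
    rw [ENNReal.ofReal_rpow_of_nonneg (by positivity) hs, ← ENNReal.ofReal_natCast,
      ← ENNReal.ofReal_mul (Nat.cast_nonneg _)]
    refine ENNReal.ofReal_le_ofReal (Eq.trans_le ?_ <| card_mul_rpow_affinityDim_le (R := K + 2)
      hb0 hb1 hbc.le (zero_lt_one.trans_le hNc) (by positivity) n)
    simp [Q]

end UpperBound

section InvariantLine

variable {N : ℕ} {b c : ℝ} {u v d : Fin N → ℝ} {Pi : (ℕ → Fin N) → ℝ × ℝ}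

lemma Sword_apply_of_invariant_line {y : ℝ} (hy : ∀ a x, (Smap c b u v d a (x, y)).2 = y)
    (w : List (Fin N)) (x : ℝ) :
    Sword c b u v d w (x, y) = (c ^ w.length * x + (Sword c b u v d w 0).1, y) := by
  have hsnd : (Sword c b u v d w (x, y)).2 = y := by
    induction w with
    | nil => rfl
    | cons a w ih =>
      have hx : Sword c b u v d w (x, y) = ((Sword c b u v d w (x, y)).1, y) := Prod.ext rfl ih
      rw [Sword, Function.comp_apply, hx, hy]
  exact Prod.ext (by rw [Sword_apply]) hsnd

lemma mk_mem_strip_of_invariant_line {y : ℝ} (hy : ∀ a x, (Smap c b u v d a (x, y)).2 = y)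
    (hy01 : y ∈ Icc (0 : ℝ) 1) (hc : 0 < c) {w : List (Fin N)} {x : ℝ}
    (hx₀ : (Sword c b u v d w 0).1 ≤ x) (hx₁ : x ≤ c ^ w.length + (Sword c b u v d w 0).1) :
    (x, y) ∈ strip c b u v d w := by
  have hcw : 0 < c ^ w.length := pow_pos hc _
  refine ⟨((x - (Sword c b u v d w 0).1) / c ^ w.length, y), ⟨⟨?_, ?_⟩, hy01⟩, ?_⟩
  · exact div_nonneg (sub_nonneg.2 hx₀) hcw.le
  · exact (div_le_one hcw).2 (by linarith)
  · rw [Sword_apply_of_invariant_line hy, mul_div_cancel₀ _ hcw.ne', sub_add_cancel]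

lemma TransversalWith.exists_abs_fst_sub_le_of_invariant_line {c₃ : ℝ}
    (htr : TransversalWith c b u v d c₃) (hPi : IsNaturalProjection c b u v d Pi) (hc : 0 < c)
    {y : ℝ} (hy : ∀ a x, (Smap c b u v d a (x, y)).2 = y) (hy01 : y ∈ Icc (0 : ℝ) 1)
    {i j : ℕ → Fin N} (hij : i 0 ≠ j 0) (hX : (Pi i).1 = (Pi j).1) (n : ℕ) :
    ∃ w : Fin n → Fin N, |(Pi i).1 - (Sword c b u v d (List.ofFn w) 0).1| ≤ c₃ * b ^ n := by
  wlog hle : (Sword c b u v d (List.ofFn (seqTake n i)) 0).1 ≤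
    (Sword c b u v d (List.ofFn (seqTake n j)) 0).1 generalizing i j
  · rw [hX]
    exact this hij.symm hX.symm (le_of_not_ge hle)
  have hrange (k : ℕ → Fin N) : (Sword c b u v d (List.ofFn (seqTake n k)) 0).1 ≤ (Pi k).1 ∧
      (Pi k).1 ≤ c ^ n + (Sword c b u v d (List.ofFn (seqTake n k)) 0).1 := by
    have hcn : 0 < c ^ n := pow_pos hc n
    obtain ⟨h₀, h₁⟩ := (hPi.mem_unitSq (seqDrop n k)).1
    rw [hPi.fst_eq n k]
    constructor <;> nlinarith
  have hmem (k : ℕ → Fin N) {x : ℝ} (hx₀ : (Sword c b u v d (List.ofFn (seqTake n k)) 0).1 ≤ x)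
      (hx₁ : x ≤ c ^ n + (Sword c b u v d (List.ofFn (seqTake n k)) 0).1) :
      (x, y) ∈ strip c b u v d (List.ofFn (seqTake n k)) :=
    mk_mem_strip_of_invariant_line hy hy01 hc hx₀ (by rwa [List.length_ofFn])
  obtain ⟨hi₀, hi₁⟩ := hrange i
  obtain ⟨hj₀, hj₁⟩ := hrange j
  rw [← hX] at hj₀ hj₁
  exact ⟨seqTake n j, htr.abs_fst_sub_le hij (z := (_, y)) (z' := (_, y))
      ⟨hmem i hi₀ hi₁, hmem j hj₀ hj₁⟩
      ⟨hmem i hle (hj₀.trans hi₁), hmem j le_rfl (le_add_of_nonneg_left (pow_pos hc n).le)⟩⟩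

lemma TransversalWith.volume_inter_eq_zero_of_invariant_line {c₃ : ℝ}
    (htr : TransversalWith c b u v d c₃) (hPi : IsNaturalProjection c b u v d Pi) (hb : 0 ≤ b)
    (hc : 0 < c) (hNb : N * b < 1) {y : ℝ} (hy : ∀ a x, (Smap c b u v d a (x, y)).2 = y)
    (hy01 : y ∈ Icc (0 : ℝ) 1) {a a' : Fin N} (haa' : a ≠ a') :
    volume ((fun i => (Pi i).1) '' {i | i 0 = a} ∩
      (fun i => (Pi i).1) '' {i | i 0 = a'}) = 0 := by
  have hcov (n : ℕ) :
      (fun i => (Pi i).1) '' {i | i 0 = a} ∩ (fun i => (Pi i).1) '' {i | i 0 = a'} ⊆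
        ⋃ w : Fin n → Fin N,
          Metric.closedBall (Sword c b u v d (List.ofFn w) 0).1 (c₃ * b ^ n) := by
    rintro x ⟨⟨i, rfl, rfl⟩, ⟨j, rfl, hX⟩⟩
    exact mem_iUnion.2
      (htr.exists_abs_fst_sub_le_of_invariant_line hPi hc hy hy01 haa' hX.symm n)
  have hlim : Tendsto (fun n => ENNReal.ofReal (2 * c₃ * (N * b) ^ n)) atTop (𝓝 0) := by
    simpa using ENNReal.tendsto_ofReal
      ((tendsto_pow_atTop_nhds_zero_of_lt_one (by positivity) hNb).const_mul (2 * c₃))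
  refine nonpos_iff_eq_zero.1 (ge_of_tendsto' hlim fun n => ?_)
  refine (measure_mono (hcov n)).trans ((measure_iUnion_fintype_le _ _).trans_eq ?_)
  simp only [Real.volume_closedBall, Finset.sum_const, Finset.card_univ, Fintype.card_fun,
    Fintype.card_fin, nsmul_eq_mul]
  rw [← ENNReal.ofReal_natCast, ← ENNReal.ofReal_mul (Nat.cast_nonneg _)]
  push_cast
  ring_nf

lemma IsNaturalProjection.image_fst_setOf_head_eq (hPi : IsNaturalProjection c b u v d Pi)
    (a : Fin N) : (fun i => (Pi i).1) '' {i | i 0 = a} =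
      (fun x => c * x + u a) '' range fun i => (Pi i).1 := by
  have hX (i : ℕ → Fin N) : (Pi i).1 = c * (Pi (seqDrop 1 i)).1 + u (i 0) := by
    rw [hPi.eq_Sword 1 i]
    simp [seqTake, Sword, Smap]
  ext x
  constructor
  · rintro ⟨i, rfl, rfl⟩
    exact ⟨_, ⟨_, rfl⟩, (hX i).symm⟩
  · rintro ⟨_, ⟨i, rfl⟩, rfl⟩
    obtain ⟨j, hj, rfl⟩ := exists_seqTake_eq_seqDrop_eq (fun _ : Fin 1 => a) i
    have hj0 : j 0 = a := congrFun hj 0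
    exact ⟨j, hj0, by simpa only [hj0] using hX j⟩

lemma IsNaturalProjection.exists_ne_volume_inter_ne_zero
    (hPi : IsNaturalProjection c b u v d Pi) (hb : 0 ≤ b) (hbc : b < c) (hc : c < 1)
    (hNc : 1 < N * c) (hvol : volume (range fun i => (Pi i).1) ≠ 0) :
    ∃ a a', a ≠ a' ∧
      volume ((fun i => (Pi i).1) '' {i | i 0 = a} ∩
        (fun i => (Pi i).1) '' {i | i 0 = a'}) ≠ 0 := by
  have hcomp : IsCompact (range fun i => (Pi i).1) :=
    isCompact_range (hPi.continuous hb hbc hc).fst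
  refine exists_ne_measure_inter_ne_zero_of_lt_sum (s := range fun i => (Pi i).1)
    (fun a => ?_) (fun a => image_subset_range _ _) ?_
  · rw [hPi.image_fst_setOf_head_eq]
    exact (hcomp.image (by fun_prop)).measurableSet
  · have hvol_image (a : Fin N) : volume ((fun i => (Pi i).1) '' {i | i 0 = a}) =
        ENNReal.ofReal c * volume (range fun i => (Pi i).1) := by
      have hcomp : (fun x => c * x + u a) = (· + u a) ∘ (c • ·) := rfl
      rw [hPi.image_fst_setOf_head_eq, hcomp, image_comp, image_add_right,
        measure_preimage_add_right, image_smul, Measure.addHaar_smul, Module.finrank_self, pow_one,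
        abs_of_pos (hb.trans_lt hbc)]
    simp only [hvol_image, Finset.sum_const, Finset.card_univ, Fintype.card_fin, nsmul_eq_mul]
    rw [← mul_assoc, ← ENNReal.ofReal_natCast, ← ENNReal.ofReal_mul N.cast_nonneg]
    exact (one_mul _).symm.trans_lt <|
      ENNReal.mul_lt_mul_left hvol hcomp.measure_lt_top.ne (ENNReal.one_lt_ofReal.2 hNc)

lemma TransversalWith.not_invariant_line {c₃ : ℝ} (htr : TransversalWith c b u v d c₃)
    (hPi : IsNaturalProjection c b u v d Pi) (hb : 0 ≤ b) (hbc : b < c) (hc : c < 1)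
    (hNb : N * b < 1) (hNc : 1 < N * c) (hvol : volume (range fun i => (Pi i).1) ≠ 0)
    {y : ℝ} (hy01 : y ∈ Icc (0 : ℝ) 1) : ¬ ∀ a x, (Smap c b u v d a (x, y)).2 = y := by
  intro hy
  obtain ⟨a, a', haa', hne⟩ := hPi.exists_ne_volume_inter_ne_zero hb hbc hc hNc hvol
  exact hne (htr.volume_inter_eq_zero_of_invariant_line hPi hb (hb.trans_lt hbc) hNb hy hy01 haa')

end InvariantLine

section Depth

variable {N : ℕ} {b c : ℝ} {u v d : Fin N → ℝ} {Pi : (ℕ → Fin N) → ℝ × ℝ}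

lemma affine_pos_of_nonneg {α β x t : ℝ} (h₀ : 0 ≤ β) (h₁ : 0 ≤ α + β) (hx : α * x + β ≠ 0)
    (ht₀ : 0 < t) (ht₁ : t < 1) : 0 < α * t + β := by
  rcases h₀.eq_or_lt with rfl | hβ
  · have hα : α ≠ 0 := fun h => hx (by rw [h, zero_mul, zero_add])
    rw [add_zero] at h₁ ⊢
    exact mul_pos (h₁.lt_of_ne' hα) ht₀
  · nlinarith

namespace IsNaturalProjection

lemma exists_eq_Smap (hPi : IsNaturalProjection c b u v d Pi) (a : Fin N) (i : ℕ → Fin N) :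
    ∃ j, Pi j = Smap c b u v d a (Pi i) := by
  obtain ⟨j, hj, rfl⟩ := exists_seqTake_eq_seqDrop_eq (fun _ : Fin 1 => a) i
  exact ⟨j, by rw [hPi.eq_Sword 1 j, hj]; rfl⟩

lemma mapsTo_Smap_Ioo (hPi : IsNaturalProjection c b u v d Pi) (hc : 0 < c) (a : Fin N) :
    MapsTo (Smap c b u v d a) (Prod.fst ⁻¹' Ioo 0 1) (Prod.fst ⁻¹' Ioo 0 1) := by
  rintro p ⟨hp₀, hp₁⟩
  have hu : 0 ≤ c * 0 + u a := (hPi.mapsTo_Smap a zero_mem_unitSq).1.1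
  have hcu : c * 1 + u a ≤ 1 :=
    (hPi.mapsTo_Smap a (show ((1, 0) : ℝ × ℝ) ∈ unitSq by simp [unitSq])).1.2
  constructor <;> simp only [Smap] <;> nlinarith

lemma Smap_snd_mem_Icc (hPi : IsNaturalProjection c b u v d Pi) (a : Fin N) {x y : ℝ}
    (hx : x ∈ Icc (0 : ℝ) 1) (hy : y ∈ Icc (0 : ℝ) 1) : d a * x + b * y + v a ∈ Icc (0 : ℝ) 1 :=
  (hPi.mapsTo_Smap a (show (x, y) ∈ unitSq from ⟨hx, hy⟩)).2

lemma Smap_snd_pos (hPi : IsNaturalProjection c b u v d Pi) {a : Fin N} {x : ℝ}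
    (hx : (Smap c b u v d a (x, 0)).2 ≠ 0) {p : ℝ × ℝ} (hp : p.1 ∈ Ioo (0 : ℝ) 1)
    (hbp : 0 ≤ b * p.2) : 0 < (Smap c b u v d a p).2 := by
  obtain ⟨h₀, -⟩ := hPi.Smap_snd_mem_Icc a (x := 0) (y := 0) (by simp) (by simp)
  obtain ⟨h₁, -⟩ := hPi.Smap_snd_mem_Icc a (x := 1) (y := 0) (by simp) (by simp)
  simp only [Smap, mul_zero, mul_one, add_zero, zero_add] at hx h₀ h₁ ⊢
  linarith [affine_pos_of_nonneg h₀ h₁ hx hp.1 hp.2]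

lemma Smap_snd_lt_one (hPi : IsNaturalProjection c b u v d Pi) {a : Fin N} {x : ℝ}
    (hx : (Smap c b u v d a (x, 1)).2 ≠ 1) {p : ℝ × ℝ} (hp : p.1 ∈ Ioo (0 : ℝ) 1)
    (hbp : b * p.2 ≤ b) : (Smap c b u v d a p).2 < 1 := by
  obtain ⟨-, h₀⟩ := hPi.Smap_snd_mem_Icc a (x := 0) (y := 1) (by simp) (by simp)
  obtain ⟨-, h₁⟩ := hPi.Smap_snd_mem_Icc a (x := 1) (y := 1) (by simp) (by simp)
  simp only [Smap, mul_zero, mul_one, zero_add] at hx h₀ h₁ ⊢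
  have hpos := affine_pos_of_nonneg (α := -d a) (β := 1 - b - v a) (x := x) (by linarith)
    (by linarith) (fun h => hx (by linarith)) hp.1 hp.2
  linarith

lemma exists_mem_Ioo_prod_Ioo (hPi : IsNaturalProjection c b u v d Pi) (hb : 0 < b) (hc : 0 < c)
    (hvol : volume (range fun i => (Pi i).1) ≠ 0)
    (hbot : ¬ ∀ a x, (Smap c b u v d a (x, 0)).2 = 0)
    (htop : ¬ ∀ a x, (Smap c b u v d a (x, 1)).2 = 1) : ∃ i, Pi i ∈ Ioo 0 1 ×ˢ Ioo 0 1 := by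
  push Not at hbot htop
  obtain ⟨a, x, hx⟩ := hbot
  obtain ⟨a', x', hx'⟩ := htop
  obtain ⟨i, hi⟩ : ∃ i, (Pi i).1 ∈ Ioo (0 : ℝ) 1 := by
    by_contra! hmem
    refine hvol (measure_mono_null (t := {0, 1}) ?_ ((toFinite _).measure_zero _))
    rintro _ ⟨i, rfl⟩
    rw [← Icc_sdiff_Ioo_same zero_le_one]
    exact ⟨(hPi.mem_unitSq i).1, hmem i⟩
  obtain ⟨j, hj⟩ := hPi.exists_eq_Smap a i
  obtain ⟨k, hk⟩ := hPi.exists_eq_Smap a' j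
  have hjx : (Pi j).1 ∈ Ioo (0 : ℝ) 1 := hj ▸ hPi.mapsTo_Smap_Ioo hc a hi
  have hjy : 0 < (Pi j).2 :=
    hj ▸ hPi.Smap_snd_pos hx hi (mul_nonneg hb.le (hPi.mem_unitSq i).2.1)
  refine ⟨k, hk ▸ hPi.mapsTo_Smap_Ioo hc a' hjx, ?_, ?_⟩ <;> rw [hk]
  · have hline := (hPi.Smap_snd_mem_Icc a' (hPi.mem_unitSq j).1 (y := 0) (by simp)).1
    simp only [Smap]
    nlinarith
  · exact hPi.Smap_snd_lt_one hx' hjx (mul_le_of_le_one_right hb.le (hPi.mem_unitSq j).2.2)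

lemma exists_strip_subset_innerSq (hPi : IsNaturalProjection c b u v d Pi) (hb : 0 ≤ b)
    (hbc : b < c) (hc : c < 1) {i : ℕ → Fin N} (hi : Pi i ∈ Ioo (0 : ℝ) 1 ×ˢ Ioo (0 : ℝ) 1) :
    ∃ (n : ℕ) (w : Fin n → Fin N), ∃ h > 0, strip c b u v d (List.ofFn w) ⊆ innerSq h := by
  obtain ⟨⟨hx₀, hx₁⟩, hy₀, hy₁⟩ := hi
  obtain ⟨h, h0, hh⟩ : ∃ h > 0, Pi i ∈ innerSq (h + h) := by
    set g := min (min (Pi i).1 (1 - (Pi i).1)) (min (Pi i).2 (1 - (Pi i).2)) with hg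
    have hg0 : 0 < g := lt_min (lt_min hx₀ (sub_pos.2 hx₁)) (lt_min hy₀ (sub_pos.2 hy₁))
    obtain ⟨⟨_, _⟩, _, _⟩ := (le_min_iff.1 hg.le).imp le_min_iff.1 le_min_iff.1
    refine ⟨g / 2, half_pos hg0, ⟨?_, ?_⟩, ?_, ?_⟩ <;> linarith
  obtain ⟨ρ, hρ, hdist⟩ := exists_tendsto_zero_dist_Sword_le hb hbc hc u v d
  obtain ⟨n, hn⟩ := (hρ.eventually_lt_const h0).exists
  refine ⟨n, seqTake n i, h, h0, ?_⟩
  rintro _ ⟨p, hp, rfl⟩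
  refine mem_innerSq_of_dist_le hh ?_
  rw [hPi.eq_Sword n i]
  refine (hdist _ p hp _ (hPi.mem_unitSq _)).trans ?_
  rw [List.length_ofFn]
  exact hn.le

lemma measure_notMem_innerSq_le (hPi : IsNaturalProjection c b u v d Pi)
    {μ : Measure (ℕ → Fin N)} (hμ : IsUniformBernoulli N μ) (hb : 0 ≤ b) (hb1 : b ≤ 1)
    (hbc : b ≤ c) {n : ℕ} {w : Fin n → Fin N} {h r : ℝ}
    (hw : strip c b u v d (List.ofFn w) ⊆ innerSq h) (hr0 : 0 ≤ r) (hrh : r ≤ h) :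
    μ {i | Pi i ∉ innerSq (b ^ n * r)} ≤
      (1 - (1 / (N : ℝ≥0∞)) ^ n) * μ {i | Pi i ∉ innerSq r} := by
  have := hμ.1
  set B := {i | Pi i ∉ innerSq r}
  have hBm : MeasurableSet B := (hPi.measurable (isClosed_innerSq r).measurableSet).compl
  have hsub : {i | Pi i ∉ innerSq (b ^ n * r)} ⊆
      seqDrop n ⁻¹' B \ (seqTake n ⁻¹' {w} ∩ seqDrop n ⁻¹' B) := by
    intro i hi
    refine ⟨fun hdrop => hi ?_, fun ⟨htake, _⟩ => hi ?_⟩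
    · rw [hPi.eq_Sword n i]
      simpa only [List.length_ofFn] using hPi.mapsTo_Sword_innerSq hb hbc
          (List.ofFn (seqTake n i)) hr0 ⟨hPi.mem_unitSq _, hdrop⟩
    · have hmem := hw (htake ▸ hPi.mem_strip n i)
      exact innerSq_subset_innerSq
        ((mul_le_of_le_one_left hr0 (pow_le_one₀ hb hb1)).trans hrh) hmem
  have hmeas : MeasurableSet (seqTake n ⁻¹' {w} ∩ seqDrop n ⁻¹' B) :=
    (measurable_seqTake n (measurableSet_singleton w)).inter (measurable_seqDrop n hBm)
  refine (measure_mono hsub).trans_eq ?_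
  rw [measure_sdiff inter_subset_right hmeas.nullMeasurableSet (measure_ne_top _ _),
    (hμ.measurePreserving_seqDrop n).measure_preimage hBm.nullMeasurableSet,
    hμ.measure_seqTake_inter_seqDrop w hBm,
    ENNReal.sub_mul (fun _ _ => measure_ne_top _ _), one_mul]

lemma ae_eventually_mem_innerSq (hPi : IsNaturalProjection c b u v d Pi)
    {μ : Measure (ℕ → Fin N)} (hμ : IsUniformBernoulli N μ) (hb : 0 < b) (hb1 : b ≤ 1)
    (hbc : b ≤ c) {m : ℕ} {w : Fin m → Fin N} {h : ℝ} (h0 : 0 ≤ h)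
    (hw : strip c b u v d (List.ofFn w) ⊆ innerSq h) {η : ℝ} (hη0 : 0 ≤ η) (hη1 : η < 1) :
    ∀ᵐ i ∂μ, ∀ᶠ n in atTop, Pi (seqDrop n i) ∈ innerSq (h * η ^ n) := by
  have := hμ.1
  obtain ⟨k, hk⟩ := exists_pow_lt_of_lt_one (pow_pos hb m) hη1
  have hθ : 1 - (1 / (N : ℝ≥0∞)) ^ m < 1 :=
    ENNReal.sub_lt_self ENNReal.one_ne_top one_ne_zero (by simp)
  have hsum : ∑' n, μ {i | Pi i ∉ innerSq (h * η ^ n)} ≠ ⊤ := by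
    refine tsum_ne_top_of_add_le_mul (k := k) hθ (fun n => measure_ne_top _ _) fun n => ?_
    have hr0 : 0 ≤ h * η ^ n := mul_nonneg h0 (pow_nonneg hη0 n)
    refine le_trans (measure_mono fun i hi => mt (fun hmem => innerSq_subset_innerSq ?_ hmem) hi)
      (hPi.measure_notMem_innerSq_le hμ hb.le hb1 hbc hw hr0
        (mul_le_of_le_one_right h0 (pow_le_one₀ hη0 hη1.le)))
    rw [pow_add, ← mul_assoc, mul_comm (b ^ m)]
    gcongr
  have hsum' : ∑' n, μ (seqDrop n ⁻¹' {i | Pi i ∉ innerSq (h * η ^ n)}) ≠ ⊤ := by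
    have hmeas (r : ℝ) : MeasurableSet {i | Pi i ∉ innerSq r} :=
      (hPi.measurable (isClosed_innerSq r).measurableSet).compl
    simpa only [(hμ.measurePreserving_seqDrop _).measure_preimage
      (hmeas _).nullMeasurableSet] using hsum
  filter_upwards [ae_eventually_notMem hsum'] with i hi
  filter_upwards [hi] with n hn
  exact not_not.1 hn

end IsNaturalProjection

end Depth

section Counting

lemma sum_le_add_sum_of_first_difference {α : Type*} [Fintype α] [DecidableEq α] {n : ℕ}
    (f : (Fin n → α) → ℝ≥0∞) (w : Fin n → α) :
    ∑ w', f w' ≤ f w + ∑ k, ∑ w' with (∀ l < k, w' l = w l) ∧ w' k ≠ w k, f w' := by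
  rw [← Finset.add_sum_erase _ f (Finset.mem_univ w)]
  gcongr
  simp only [Finset.sum_filter]
  rw [Finset.sum_comm]
  refine (Finset.sum_le_sum fun w' hw' => ?_).trans
    (Finset.sum_le_sum_of_subset (Finset.subset_univ _))
  obtain ⟨k, hk, hmin⟩ := wellFounded_lt.has_min {k | w' k ≠ w k}
    (Function.ne_iff.1 (Finset.ne_of_mem_erase hw'))
  have hfirst : (∀ l < k, w' l = w l) ∧ w' k ≠ w k :=
    ⟨fun l hl => not_not.1 fun h => hmin l h hl, hk⟩
  refine le_of_eq_of_le ?_ (Finset.single_le_sum (fun _ _ => zero_le) (Finset.mem_univ k))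
  rw [if_pos hfirst]

lemma IsUniformBernoulli.measure_seqTake_preimage_finset {N : ℕ} {μ : Measure (ℕ → Fin N)}
    (hμ : IsUniformBernoulli N μ) {n : ℕ} (T : Finset (Fin n → Fin N)) :
    μ (seqTake n ⁻¹' T) = T.card * (1 / (N : ℝ≥0∞)) ^ n := by
  rw [← sum_measure_preimage_singleton T fun w _ =>
    measurable_seqTake n (measurableSet_singleton w)]
  simp only [hμ.measure_seqTake_preimage, Finset.sum_const, nsmul_eq_mul]

variable {N : ℕ} {b c : ℝ} {u v d : Fin N → ℝ} {Pi : (ℕ → Fin N) → ℝ × ℝ}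
  {μ : Measure (ℕ → Fin N)} {φ : ℝ → ℝ≥0∞} {M : ℝ≥0∞} {n : ℕ}

lemma TransversalWith.abs_fst_sub_le_of_first_difference {c₃ : ℝ}
    (htr : TransversalWith c b u v d c₃) (hb : b ≠ 0) (hc : 0 < c) {w w' : Fin n → Fin N}
    {k : Fin n} (hlt : ∀ l < k, w' l = w l) (hk : w' k ≠ w k) {z z' : ℝ × ℝ}
    (hz : z ∈ strip c b u v d (List.ofFn w) ∩ strip c b u v d (List.ofFn w'))
    (hz' : z' ∈ strip c b u v d (List.ofFn w) ∩ strip c b u v d (List.ofFn w')) :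
    |z.1 - z'.1| ≤ c ^ n * (c₃ * (b / c) ^ (n - k : ℕ)) := by
  obtain ⟨i, hi, -⟩ := exists_seqTake_eq_seqDrop_eq w fun _ => w k
  obtain ⟨j, hj, -⟩ := exists_seqTake_eq_seqDrop_eq w' fun _ => w k
  subst hi hj
  have hij : seqTake k i = seqTake k j :=
    funext fun l => (hlt ⟨l, l.2.trans k.2⟩ l.2).symm
  obtain ⟨m, hm⟩ := Nat.exists_eq_add_of_le k.2.le
  have hdist := htr.abs_fst_sub_le_of_seqTake_eq hb hc (m := m) hij hk.symm (z := z) (z' := z')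
  rw [← hm] at hdist
  refine (hdist hz hz').trans_eq ?_
  rw [Nat.sub_eq_of_eq_add' hm]
  nth_rw 2 [hm]
  rw [pow_add, div_pow]
  field_simp

namespace IsNaturalProjection

lemma measure_seqTake_inter_fst (hPi : IsNaturalProjection c b u v d Pi)
    (hμ : IsUniformBernoulli N μ) (w : Fin n → Fin N) {A : Set ℝ} (hA : MeasurableSet A) :
    μ (seqTake n ⁻¹' {w} ∩ {i | (Pi (seqDrop n i)).1 ∈ A}) =
      (1 / (N : ℝ≥0∞)) ^ n * μ.map (fun i => (Pi i).1) A := by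
  rw [Measure.map_apply hPi.measurable.fst hA,
    ← hμ.measure_seqTake_inter_seqDrop w (hPi.measurable.fst hA)]
  rfl

lemma measure_le_of_abs_fst_sub_le (hPi : IsNaturalProjection c b u v d Pi)
    (hμ : IsUniformBernoulli N μ) (hc : 0 < c) (hφ : Measurable φ)
    (hφμ : μ.map (fun i => (Pi i).1) = volume.withDensity φ) {w : Fin n → Fin N}
    {S : Set (ℕ → Fin N)} {x r : ℝ} (hSw : ∀ i ∈ S, seqTake n i = w)
    (hSφ : ∀ i ∈ S, φ (Pi (seqDrop n i)).1 ≤ M) (hSx : ∀ i ∈ S, |(Pi i).1 - x| ≤ c ^ n * r) :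
    μ S ≤ (1 / (N : ℝ≥0∞)) ^ n * (M * ENNReal.ofReal (2 * r)) := by
  have hcn : 0 < c ^ n := pow_pos hc n
  set x₀ := (x - (Sword c b u v d (List.ofFn w) 0).1) / c ^ n with hx₀
  set A := Metric.closedBall x₀ r ∩ {t | φ t ≤ M}
  have hA : MeasurableSet A :=
    Metric.isClosed_closedBall.measurableSet.inter (measurableSet_le hφ measurable_const)
  have hsub : S ⊆ seqTake n ⁻¹' {w} ∩ {i | (Pi (seqDrop n i)).1 ∈ A} := by
    refine fun i hi => ⟨hSw i hi, ?_, hSφ i hi⟩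
    have hscale : c ^ n * ((Pi (seqDrop n i)).1 - x₀) = (Pi i).1 - x := by
      rw [hPi.fst_eq n i, hSw i hi, hx₀]
      field_simp
      ring
    rw [Metric.mem_closedBall, Real.dist_eq]
    refine le_of_mul_le_mul_left ?_ hcn
    rw [← abs_of_pos hcn, ← abs_mul, hscale, abs_of_pos hcn]
    exact hSx i hi
  refine (measure_mono hsub).trans ?_
  rw [hPi.measure_seqTake_inter_fst hμ w hA, hφμ, ← Real.volume_closedBall x₀]
  gcongr
  exact withDensity_inter_le_mul hφ Metric.isClosed_closedBall.measurableSet M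

end IsNaturalProjection

/-- The set of sequences `i` whose projection has, seen from scale `n`, density at most `M`: the
density `φ` of the projected measure is at most `M` at `σⁿ i`, and for each `k < n` the ball of
radius `2 c ^ (n - k)` about the projection of `σᵏ i` has average density at most `M`. -/
def boundedDensitySet (c : ℝ) (Pi : (ℕ → Fin N) → ℝ × ℝ) (φ : ℝ → ℝ≥0∞) (M : ℝ≥0∞) (n : ℕ) :
    Set (ℕ → Fin N) :=
  {i | φ (Pi (seqDrop n i)).1 ≤ M ∧ ∀ k < n,
    volume.withDensity φ (Metric.closedBall (Pi (seqDrop k i)).1 (2 * c ^ (n - k))) ≤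
      M * volume (Metric.closedBall (0 : ℝ) (2 * c ^ (n - k)))}

lemma TransversalWith.measure_inter_strip_le {c₃ : ℝ} (htr : TransversalWith c b u v d c₃)
    (hPi : IsNaturalProjection c b u v d Pi) (hμ : IsUniformBernoulli N μ) (hb : b ≠ 0)
    (hc : 0 < c) (hφ : Measurable φ) (hφμ : μ.map (fun i => (Pi i).1) = volume.withDensity φ)
    {w w' : Fin n → Fin N} {k : Fin n} (hlt : ∀ l < k, w' l = w l) (hk : w' k ≠ w k) :
    μ (seqTake n ⁻¹' {w} ∩ (boundedDensitySet c Pi φ M n ∩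
        Pi ⁻¹' strip c b u v d (List.ofFn w'))) ≤
      (1 / (N : ℝ≥0∞)) ^ n * (M * ENNReal.ofReal (2 * (c₃ * (b / c) ^ (n - k : ℕ)))) := by
  set S := seqTake n ⁻¹' {w} ∩ (boundedDensitySet c Pi φ M n ∩
    Pi ⁻¹' strip c b u v d (List.ofFn w'))
  rcases S.eq_empty_or_nonempty with hS | ⟨i₀, hi₀⟩
  · rw [hS, measure_empty]
    exact zero_le
  have hmem {i : ℕ → Fin N} (hi : i ∈ S) :
      Pi i ∈ strip c b u v d (List.ofFn w) ∩ strip c b u v d (List.ofFn w') :=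
    ⟨hi.1 ▸ hPi.mem_strip n i, hi.2.2⟩
  exact hPi.measure_le_of_abs_fst_sub_le hμ hc hφ hφμ (fun i hi => hi.1)
    (fun i hi => hi.2.1.1)
    fun i hi => htr.abs_fst_sub_le_of_first_difference hb hc hlt hk (hmem hi) (hmem hi₀)

lemma IsNaturalProjection.card_mul_le_of_mem_boundedDensitySet
    (hPi : IsNaturalProjection c b u v d Pi) (hμ : IsUniformBernoulli N μ) (hc : 0 < c)
    (hφμ : μ.map (fun i => (Pi i).1) = volume.withDensity φ) {i : ℕ → Fin N}
    (hi : i ∈ boundedDensitySet c Pi φ M n) {k : ℕ} (hk : k < n) {T : Finset (Fin n → Fin N)}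
    (hT : ∀ w ∈ T, (∀ l : Fin n, l < k → w l = i l) ∧
      (strip c b u v d (List.ofFn (seqTake n i)) ∩ strip c b u v d (List.ofFn w)).Nonempty) :
    T.card * (1 / (N : ℝ≥0∞)) ^ n ≤
      (1 / (N : ℝ≥0∞)) ^ k * (M * ENNReal.ofReal (2 * (2 * c ^ (n - k)))) := by
  have hck : 0 < c ^ k := pow_pos hc k
  have hsub : seqTake n ⁻¹' (T : Set (Fin n → Fin N)) ⊆ seqTake k ⁻¹' {seqTake k i} ∩
      {j | (Pi (seqDrop k j)).1 ∈ Metric.closedBall (Pi (seqDrop k i)).1 (2 * c ^ (n - k))} := by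
    intro j hj
    obtain ⟨hlt, z, hzi, hzj⟩ := hT _ hj
    have htake : seqTake k j = seqTake k i := funext fun l => hlt ⟨l, l.2.trans hk⟩ l.2
    have hdist : |(Pi j).1 - (Pi i).1| ≤ c ^ k * (2 * c ^ (n - k)) := by
      have hj := abs_fst_sub_le_of_mem_strip hc.le (hPi.mem_strip n j) hzj
      have hi := abs_fst_sub_le_of_mem_strip hc.le hzi (hPi.mem_strip n i)
      rw [List.length_ofFn] at hi hj
      rw [mul_left_comm, ← pow_add, Nat.add_sub_cancel' hk.le, two_mul]
      exact (abs_sub_le _ z.1 _).trans (add_le_add hj hi)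
    refine ⟨htake, ?_⟩
    rw [hPi.fst_eq k j, hPi.fst_eq k i, htake, add_sub_add_right_eq_sub, ← mul_sub, abs_mul,
      abs_of_pos hck] at hdist
    exact le_of_mul_le_mul_left hdist hck
  rw [← hμ.measure_seqTake_preimage_finset]
  refine (measure_mono hsub).trans ?_
  rw [hPi.measure_seqTake_inter_fst hμ _ Metric.isClosed_closedBall.measurableSet, hφμ,
    ← Real.volume_closedBall 0]
  gcongr
  exact hi.2 k hk

end Counting

section StripCount

variable {N : ℕ} {b c c₃ : ℝ} {u v d : Fin N → ℝ} {Pi : (ℕ → Fin N) → ℝ × ℝ}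
  {μ : Measure (ℕ → Fin N)} {φ : ℝ → ℝ≥0∞} {M : ℝ≥0∞} {n : ℕ}

namespace TransversalWith

lemma sum_measure_inter_strip_le_of_first_difference (htr : TransversalWith c b u v d c₃)
    (hPi : IsNaturalProjection c b u v d Pi) (hμ : IsUniformBernoulli N μ) (hb : b ≠ 0)
    (hc : 0 < c) (hφ : Measurable φ) (hφμ : μ.map (fun i => (Pi i).1) = volume.withDensity φ)
    (w : Fin n → Fin N) (k : Fin n) :
    ∑ w' with (∀ l < k, w' l = w l) ∧ w' k ≠ w k, μ (seqTake n ⁻¹' {w} ∩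
        (boundedDensitySet c Pi φ M n ∩ Pi ⁻¹' strip c b u v d (List.ofFn w'))) ≤
      (1 / (N : ℝ≥0∞)) ^ n * (M ^ 2 * ENNReal.ofReal (8 * c₃ * (N * b) ^ (n - k : ℕ))) := by
  rw [← Finset.sum_filter_ne_zero]
  set T := Finset.filter (fun w' => μ (seqTake n ⁻¹' {w} ∩
    (boundedDensitySet c Pi φ M n ∩ Pi ⁻¹' strip c b u v d (List.ofFn w'))) ≠ 0) _ with hT
  rcases T.eq_empty_or_nonempty with hempty | ⟨w₀, hw₀⟩
  · rw [hempty, Finset.sum_empty]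
    exact zero_le
  simp only [hT, Finset.mem_filter, Finset.mem_univ, true_and] at hw₀
  obtain ⟨i, rfl, hi, -⟩ := nonempty_of_measure_ne_zero hw₀.2
  have hcard := hPi.card_mul_le_of_mem_boundedDensitySet hμ hc hφμ hi k.2 (T := T) fun w' hw' => by
    simp only [hT, Finset.mem_filter, Finset.mem_univ, true_and] at hw'
    obtain ⟨j, hji, -, hj⟩ := nonempty_of_measure_ne_zero hw'.2
    exact ⟨hw'.1.1, Pi j, hji ▸ hPi.mem_strip n j, hj⟩
  set m : ℕ := n - k
  have hofReal : (N : ℝ≥0∞) ^ m * (ENNReal.ofReal (2 * (2 * c ^ m)) *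
      ENNReal.ofReal (2 * (c₃ * (b / c) ^ m))) = ENNReal.ofReal (8 * c₃ * (N * b) ^ m) := by
    rw [← ENNReal.ofReal_natCast, ← ENNReal.ofReal_pow N.cast_nonneg,
      ← ENNReal.ofReal_mul (by positivity), ← ENNReal.ofReal_mul (by positivity)]
    rw [div_pow]
    congr 1
    field_simp
    ring
  calc ∑ w' ∈ T, μ (seqTake n ⁻¹' {seqTake n i} ∩
          (boundedDensitySet c Pi φ M n ∩ Pi ⁻¹' strip c b u v d (List.ofFn w')))
      ≤ ∑ w' ∈ T, (1 / (N : ℝ≥0∞)) ^ n * (M * ENNReal.ofReal (2 * (c₃ * (b / c) ^ m))) := by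
        refine Finset.sum_le_sum fun w' hw' => ?_
        simp only [hT, Finset.mem_filter, Finset.mem_univ, true_and] at hw'
        exact htr.measure_inter_strip_le hPi hμ hb hc hφ hφμ hw'.1.1 hw'.1.2
    _ = T.card * (1 / (N : ℝ≥0∞)) ^ n * (M * ENNReal.ofReal (2 * (c₃ * (b / c) ^ m))) := by
        rw [Finset.sum_const, nsmul_eq_mul, mul_assoc]
    _ ≤ (1 / (N : ℝ≥0∞)) ^ (k : ℕ) * (M * ENNReal.ofReal (2 * (2 * c ^ m))) *
          (M * ENNReal.ofReal (2 * (c₃ * (b / c) ^ m))) := by gcongr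
    _ = (1 / (N : ℝ≥0∞)) ^ n * (M ^ 2 * ENNReal.ofReal (8 * c₃ * (N * b) ^ m)) := by
        rw [hμ.one_div_pow_eq_mul_pow_sub k.2.le, ← hofReal]
        ring

lemma sum_measure_inter_strip_le (htr : TransversalWith c b u v d c₃)
    (hPi : IsNaturalProjection c b u v d Pi) (hμ : IsUniformBernoulli N μ) (hb : 0 < b)
    (hNb : N * b < 1) (hc : 0 < c) (hc₃ : 0 ≤ c₃) (hφ : Measurable φ)
    (hφμ : μ.map (fun i => (Pi i).1) = volume.withDensity φ) (w : Fin n → Fin N) :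
    ∑ w' : Fin n → Fin N, μ (seqTake n ⁻¹' {w} ∩
        (boundedDensitySet c Pi φ M n ∩ Pi ⁻¹' strip c b u v d (List.ofFn w'))) ≤
      (1 / (N : ℝ≥0∞)) ^ n * (1 + M ^ 2 * ENNReal.ofReal (8 * c₃ * (1 - N * b)⁻¹)) := by
  have hgeom : ∑ k : Fin n, ENNReal.ofReal (8 * c₃ * (N * b) ^ (n - k : ℕ)) ≤
      ENNReal.ofReal (8 * c₃ * (1 - N * b)⁻¹) := by
    rw [← ENNReal.ofReal_sum_of_nonneg fun k _ => by positivity, ← Finset.mul_sum,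
      Fin.sum_univ_eq_sum_range fun k => (N * b) ^ (n - k)]
    gcongr
    exact sum_pow_sub_le (by positivity) hNb n
  refine (sum_le_add_sum_of_first_difference _ w).trans ?_
  rw [mul_add, mul_one]
  refine add_le_add ((measure_mono inter_subset_left).trans_eq (hμ.measure_seqTake_preimage w)) ?_
  refine (Finset.sum_le_sum fun k _ => htr.sum_measure_inter_strip_le_of_first_difference
    hPi hμ hb.ne' hc hφ hφμ w k).trans ?_
  rw [← Finset.mul_sum, ← Finset.mul_sum]
  gcongr

end TransversalWith

open Classical in
/-- The words of length `n` whose strip contains the point `z`. -/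
def stripWords (c b : ℝ) (u v d : Fin N → ℝ) (n : ℕ) (z : ℝ × ℝ) : Finset (Fin n → Fin N) :=
  {w | z ∈ strip c b u v d (List.ofFn w)}

lemma mem_stripWords {z : ℝ × ℝ} {w : Fin n → Fin N} :
    w ∈ stripWords c b u v d n z ↔ z ∈ strip c b u v d (List.ofFn w) := by
  simp [stripWords]

lemma card_stripWords (n : ℕ) (z : ℝ × ℝ) : ((stripWords c b u v d n z).card : ℝ≥0∞) =
    ∑ w : Fin n → Fin N, (strip c b u v d (List.ofFn w)).indicator 1 z := by
  classical
  simp [stripWords, indicator_apply]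

lemma measurableSet_strip (w : List (Fin N)) : MeasurableSet (strip c b u v d w) :=
  (isCompact_strip w).measurableSet

lemma measurable_card_stripWords (n : ℕ) :
    Measurable fun z => ((stripWords c b u v d n z).card : ℝ≥0∞) := by
  simp only [card_stripWords]
  exact Finset.measurable_fun_sum _ fun w _ => measurable_one.indicator (measurableSet_strip _)

lemma setLIntegral_card_stripWords (hPi : Measurable Pi) (G : Set (ℕ → Fin N)) :
    ∫⁻ i in G, ((stripWords c b u v d n (Pi i)).card : ℝ≥0∞) ∂μ =
      ∑ w : Fin n → Fin N, μ (G ∩ Pi ⁻¹' strip c b u v d (List.ofFn w)) := by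
  have hstrip (w : Fin n → Fin N) : MeasurableSet (Pi ⁻¹' strip c b u v d (List.ofFn w)) :=
    hPi (measurableSet_strip _)
  have hind (w : Fin n → Fin N) : (fun i => (strip c b u v d (List.ofFn w)).indicator 1 (Pi i)) =
      (Pi ⁻¹' strip c b u v d (List.ofFn w)).indicator (1 : (ℕ → Fin N) → ℝ≥0∞) := rfl
  simp only [card_stripWords]
  rw [lintegral_finsetSum _ fun w _ => hind w ▸ measurable_one.indicator (hstrip w)]
  refine Finset.sum_congr rfl fun w _ => ?_
  rw [hind, lintegral_indicator_one (hstrip w), Measure.restrict_apply (hstrip w), inter_comm]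

namespace TransversalWith

lemma setLIntegral_card_stripWords_le (htr : TransversalWith c b u v d c₃)
    (hPi : IsNaturalProjection c b u v d Pi) (hμ : IsUniformBernoulli N μ) (hb : 0 < b)
    (hNb : N * b < 1) (hc : 0 < c) (hc₃ : 0 ≤ c₃) (hφ : Measurable φ)
    (hφμ : μ.map (fun i => (Pi i).1) = volume.withDensity φ) (M : ℝ≥0∞) (n : ℕ) :
    ∫⁻ i in boundedDensitySet c Pi φ M n, ((stripWords c b u v d n (Pi i)).card : ℝ≥0∞) ∂μ ≤
      1 + M ^ 2 * ENNReal.ofReal (8 * c₃ * (1 - N * b)⁻¹) := by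
  rw [setLIntegral_card_stripWords hPi.measurable]
  rw [← Finset.sum_congr rfl fun w' _ => sum_measure_fiber_inter (measurable_seqTake n) _,
    Finset.sum_comm]
  refine (Finset.sum_le_sum fun w _ =>
    htr.sum_measure_inter_strip_le hPi hμ hb hNb hc hc₃ hφ hφμ w).trans_eq ?_
  rw [Finset.sum_const, Finset.card_univ, Fintype.card_fun, Fintype.card_fin, Fintype.card_fin,
    nsmul_eq_mul, Nat.cast_pow, ← mul_assoc, hμ.natCast_pow_mul_one_div_pow, one_mul]

lemma measure_card_stripWords_ge_le (htr : TransversalWith c b u v d c₃)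
    (hPi : IsNaturalProjection c b u v d Pi) (hμ : IsUniformBernoulli N μ) (hb : 0 < b)
    (hNb : N * b < 1) (hc : 0 < c) (hc₃ : 0 ≤ c₃) (hφ : Measurable φ)
    (hφμ : μ.map (fun i => (Pi i).1) = volume.withDensity φ) (hM1 : 1 ≤ M) (hM : M ≠ ⊤) (n : ℕ) :
    μ ({i | M ^ 3 ≤ ((stripWords c b u v d n (Pi i)).card : ℝ≥0∞)} ∩
        boundedDensitySet c Pi φ M n) ≤
      (1 + ENNReal.ofReal (8 * c₃ * (1 - N * b)⁻¹)) * M⁻¹ := by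
  have hmeas : Measurable fun i => ((stripWords c b u v d n (Pi i)).card : ℝ≥0∞) :=
    (measurable_card_stripWords n).comp hPi.measurable
  have hM0 : M ≠ 0 := (one_pos.trans_le hM1).ne'
  have hmarkov := mul_meas_ge_le_lintegral (μ := μ.restrict (boundedDensitySet c Pi φ M n)) hmeas
    (M ^ 3)
  rw [Measure.restrict_apply (measurableSet_le measurable_const hmeas)] at hmarkov
  set C := ENNReal.ofReal (8 * c₃ * (1 - N * b)⁻¹)
  have hbound : M ^ 3 * μ _ ≤ M ^ 2 * (1 + C) := calc
    _ ≤ 1 + M ^ 2 * C :=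
      hmarkov.trans (htr.setLIntegral_card_stripWords_le hPi hμ hb hNb hc hc₃ hφ hφμ M n)
    _ ≤ M ^ 2 * (1 + C) := by
      rw [mul_add, mul_one]
      gcongr
      exact one_le_pow₀ hM1
  rw [← div_eq_mul_inv, ENNReal.le_div_iff_mul_le (.inl hM0) (.inl hM), mul_comm,
    ← ENNReal.mul_le_mul_iff_right (pow_ne_zero 2 hM0) (ENNReal.pow_ne_top hM), ← mul_assoc,
    ← pow_succ]
  exact hbound

end TransversalWith

end StripCount

section Generic

variable {N : ℕ} {b c : ℝ} {u v d : Fin N → ℝ} {Pi : (ℕ → Fin N) → ℝ × ℝ}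
  {μ : Measure (ℕ → Fin N)} {φ : ℝ → ℝ≥0∞}

lemma measure_compl_boundedDensitySet_le (hPi : Measurable Pi) (hμ : IsUniformBernoulli N μ)
    (hc : 0 < c) (hφ : Measurable φ) (hφμ : μ.map (fun i => (Pi i).1) = volume.withDensity φ)
    {p q : ℝ} (hpq : q.HolderConjugate p) {M : ℝ≥0∞} (hM0 : M ≠ 0) (hM : M ≠ ⊤) (n : ℕ) :
    μ (boundedDensitySet c Pi φ M n)ᶜ ≤
      (n + 1) * ((∫⁻ x, φ x ^ q) ^ (1 / q) * M⁻¹ ^ (1 / p)) := by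
  have := hμ.1
  have : IsProbabilityMeasure (volume.withDensity φ) :=
    hφμ ▸ Measure.isProbabilityMeasure_map hPi.fst.aemeasurable
  have hrare (k : ℕ) {A : Set ℝ} (hA : MeasurableSet A) (hAM : volume A ≤ M⁻¹) :
      μ {i | (Pi (seqDrop k i)).1 ∈ A} ≤ (∫⁻ x, φ x ^ q) ^ (1 / q) * M⁻¹ ^ (1 / p) := calc
    μ {i | (Pi (seqDrop k i)).1 ∈ A} = volume.withDensity φ A := by
      rw [← hφμ, Measure.map_apply hPi.fst hA]
      exact (hμ.measurePreserving_seqDrop k).measure_preimage (hPi.fst hA).nullMeasurableSet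
    _ ≤ (∫⁻ x, φ x ^ q) ^ (1 / q) * volume A ^ (1 / p) := withDensity_le_Lq_mul_rpow hφ hpq hA
    _ ≤ (∫⁻ x, φ x ^ q) ^ (1 / q) * M⁻¹ ^ (1 / p) := by
      gcongr
      exact one_div_nonneg.2 hpq.symm.nonneg
  have hsub : (boundedDensitySet c Pi φ M n)ᶜ ⊆ {i | (Pi (seqDrop n i)).1 ∈ {x | M ≤ φ x}} ∪
      ⋃ k ∈ Finset.range n, {i | (Pi (seqDrop k i)).1 ∈
        {x | M * volume (Metric.closedBall (0 : ℝ) (2 * c ^ (n - k))) ≤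
          volume.withDensity φ (Metric.closedBall x (2 * c ^ (n - k)))}} := by
    intro i hi
    by_contra! hrare
    simp only [mem_union, mem_iUnion, Finset.mem_range, mem_ofPred_eq, not_or, not_exists,
      not_le] at hrare
    exact hi ⟨hrare.1.le, fun k hk => (hrare.2 k hk).le⟩
  refine (measure_mono hsub).trans <| (measure_union_le _ _).trans ?_
  rw [add_comm, add_mul, one_mul]
  refine add_le_add ((measure_biUnion_finset_le _ _).trans ?_)
    (hrare n (measurableSet_le measurable_const hφ) (measure_density_ge_le_inv hφ hM0 hM))
  refine (Finset.sum_le_card_nsmul _ _ _ fun k _ => hrare k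
    (measurableSet_le measurable_const (measurable_measure_closedBall _ _))
    (measure_closedBall_ge_le_inv _ _ (by positivity) hM0 hM)).trans_eq ?_
  rw [Finset.card_range, nsmul_eq_mul]

lemma ae_eventually_mem_boundedDensitySet (hPi : Measurable Pi) (hμ : IsUniformBernoulli N μ)
    (hc : 0 < c) (hφ : Measurable φ) (hφμ : μ.map (fun i => (Pi i).1) = volume.withDensity φ)
    {q : ℝ} (hq : 1 < q) (hφq : ∫⁻ x, φ x ^ q < ⊤) {τ : ℝ≥0∞} (hτ1 : 1 < τ) (hτ : τ ≠ ⊤) :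
    ∀ᵐ i ∂μ, ∀ᶠ n in atTop, i ∈ boundedDensitySet c Pi φ (τ ^ n) n := by
  have hpq := Real.HolderConjugate.conjExponent hq
  have hκ : τ⁻¹ ^ (1 / q.conjExponent) < 1 :=
    ENNReal.rpow_lt_one (ENNReal.inv_lt_one.2 hτ1) (one_div_pos.2 hpq.symm.pos)
  have hsum : ∑' n, μ (boundedDensitySet c Pi φ (τ ^ n) n)ᶜ ≠ ⊤ := by
    refine ne_top_of_le_ne_top ?_ <| ENNReal.tsum_le_tsum fun n =>
      measure_compl_boundedDensitySet_le hPi hμ hc hφ hφμ hpq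
        (pow_ne_zero n (zero_lt_one.trans hτ1).ne') (ENNReal.pow_ne_top hτ) n
    have hpow (n : ℕ) : (τ ^ n)⁻¹ ^ (1 / q.conjExponent) = (τ⁻¹ ^ (1 / q.conjExponent)) ^ n := by
      rw [ENNReal.inv_pow, ← ENNReal.rpow_natCast_mul, mul_comm, ENNReal.rpow_mul_natCast]
    simp only [hpow, mul_left_comm _ (_ ^ (1 / q))]
    rw [ENNReal.tsum_mul_left]
    exact ENNReal.mul_ne_top (ENNReal.rpow_ne_top_of_nonneg (one_div_nonneg.2 hpq.nonneg) hφq.ne)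
      (tsum_succ_mul_pow_ne_top hκ)
  filter_upwards [ae_eventually_notMem hsum] with i hi
  exact hi.mono fun n hn => not_not.1 hn

lemma TransversalWith.ae_eventually_card_stripWords_le {c₃ : ℝ}
    (htr : TransversalWith c b u v d c₃) (hPi : IsNaturalProjection c b u v d Pi)
    (hμ : IsUniformBernoulli N μ) (hb : 0 < b) (hNb : N * b < 1) (hc : 0 < c) (hc₃ : 0 ≤ c₃)
    (hφ : Measurable φ) (hφμ : μ.map (fun i => (Pi i).1) = volume.withDensity φ)
    {q : ℝ} (hq : 1 < q) (hφq : ∫⁻ x, φ x ^ q < ⊤) {τ : ℝ≥0∞} (hτ1 : 1 < τ) (hτ : τ ≠ ⊤) :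
    ∀ᵐ i ∂μ, ∀ᶠ n in atTop, ((stripWords c b u v d n (Pi i)).card : ℝ≥0∞) ≤ (τ ^ n) ^ 3 := by
  have hsum : ∑' n, μ ({i | (τ ^ n) ^ 3 ≤ ((stripWords c b u v d n (Pi i)).card : ℝ≥0∞)} ∩
      boundedDensitySet c Pi φ (τ ^ n) n) ≠ ⊤ := by
    refine ne_top_of_le_ne_top ?_ <| ENNReal.tsum_le_tsum fun n =>
      htr.measure_card_stripWords_ge_le hPi hμ hb hNb hc hc₃ hφ hφμ (one_le_pow₀ hτ1.le)
        (ENNReal.pow_ne_top hτ) n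
    simp only [ENNReal.inv_pow]
    rw [ENNReal.tsum_mul_left]
    exact ENNReal.mul_ne_top (by finiteness)
      (tsum_geometric_lt_top.2 (ENNReal.inv_lt_one.2 hτ1)).ne
  filter_upwards [ae_eventually_notMem hsum,
    ae_eventually_mem_boundedDensitySet hPi.measurable hμ hc hφ hφμ hq hφq hτ1 hτ] with i hi hdens
  filter_upwards [hi, hdens] with n hn hn'
  exact not_lt.1 fun hlt => hn ⟨hlt.le, hn'⟩

end Generic

section LowerBound

variable {N : ℕ} {b c : ℝ} {u v d : Fin N → ℝ} {Pi : (ℕ → Fin N) → ℝ × ℝ}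
  {μ : Measure (ℕ → Fin N)} {φ : ℝ → ℝ≥0∞}

/-- The sequences that behave well at every scale `n ≥ n₀`: the point `Pi (σⁿ i)` has distance at
least `h η ^ n` from the boundary of the unit square, the projected density at that point is at
most `η ^ (-n)`, and `Pi i` lies in at most `η ^ (-3n)` strips of level `n`. -/
def regularSet (c b : ℝ) (u v d : Fin N → ℝ) (Pi : (ℕ → Fin N) → ℝ × ℝ) (φ : ℝ → ℝ≥0∞)
    (h η : ℝ) (n₀ : ℕ) : Set (ℕ → Fin N) :=
  {i | ∀ n ≥ n₀, Pi (seqDrop n i) ∈ innerSq (h * η ^ n) ∧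
    φ (Pi (seqDrop n i)).1 ≤ ENNReal.ofReal η⁻¹ ^ n ∧
    ((stripWords c b u v d n (Pi i)).card : ℝ≥0∞) ≤ (ENNReal.ofReal η⁻¹ ^ n) ^ 3}

lemma exists_pow_three_mul_rpow_mul_eq (hb0 : 0 < b) (hb1 : b < 1) (hNc : 0 < N * c) {t : ℝ}
    (ht : 0 ≤ t) (hts : t < affinityDim N b c) :
    ∃ η, 0 < η ∧ η < 1 ∧ η ^ 3 * (η * b) ^ t * (N * c) = b := by
  have hη0 : 0 < b ^ ((affinityDim N b c - t) / (3 + t)) := Real.rpow_pos_of_pos hb0 _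
  refine ⟨_, hη0, Real.rpow_lt_one hb0.le hb1 (div_pos (sub_pos.2 hts) (by positivity)), ?_⟩
  rw [Real.mul_rpow hη0.le hb0.le, ← Real.rpow_natCast _ 3, ← mul_assoc (_ ^ _),
    ← Real.rpow_add hη0, ← Real.rpow_mul hb0.le, ← Real.rpow_add hb0, Nat.cast_ofNat,
    div_mul_cancel₀ _ (by positivity : 3 + t ≠ 0), sub_add_cancel]
  exact rpow_affinityDim_mul hb0 hb1 hNc

lemma ofReal_inv_pow_mul_eq (hb : 0 < b) (hc : 0 < c) (hN : N ≠ 0) {a η t : ℝ} (ha : 0 ≤ a)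
    (hη : 0 < η) (hηt : η ^ 3 * (η * b) ^ t * (N * c) = b) (n : ℕ) :
    (ENNReal.ofReal η⁻¹ ^ n) ^ 3 * ((1 / (N : ℝ≥0∞)) ^ n *
        (ENNReal.ofReal η⁻¹ ^ n * ENNReal.ofReal (2 * (a * (η * b / c) ^ n)))) =
      ENNReal.ofReal (2 * a) * ENNReal.ofReal ((η * b) ^ n) ^ t := by
  have hηb : 0 < η * b := mul_pos hη hb
  have hN' : 1 / (N : ℝ≥0∞) = ENNReal.ofReal (1 / N) := by
    rw [ENNReal.ofReal_div_of_pos (by positivity), ENNReal.ofReal_one, ENNReal.ofReal_natCast]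
  have hηt' : (η * b) ^ t = η⁻¹ ^ 3 * (1 / N * (η⁻¹ * (η * b / c))) := by
    field_simp
    linarith
  rw [ENNReal.ofReal_rpow_of_pos (by positivity), ← Real.rpow_pow_comm hηb.le, hηt', hN',
    ← ENNReal.ofReal_mul (by positivity), ← ENNReal.ofReal_pow (by positivity),
    ← ENNReal.ofReal_pow (by positivity), ← ENNReal.ofReal_pow (by positivity),
    ← ENNReal.ofReal_mul (by positivity), ← ENNReal.ofReal_mul (by positivity),
    ← ENNReal.ofReal_mul (by positivity)]
  congr 1
  ring

namespace IsNaturalProjection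

lemma measure_le_card_stripWords_mul (hPi : IsNaturalProjection c b u v d Pi)
    (hμ : IsUniformBernoulli N μ) (hc : 0 < c) (hφ : Measurable φ)
    (hφμ : μ.map (fun i => (Pi i).1) = volume.withDensity φ) {n : ℕ} {M : ℝ≥0∞} {r : ℝ}
    {z : ℝ × ℝ} {S : Set (ℕ → Fin N)}
    (hSz : ∀ i ∈ S, z ∈ strip c b u v d (List.ofFn (seqTake n i)))
    (hSφ : ∀ i ∈ S, φ (Pi (seqDrop n i)).1 ≤ M) (hSx : ∀ i ∈ S, |(Pi i).1 - z.1| ≤ c ^ n * r) :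
    μ S ≤ (stripWords c b u v d n z).card *
      ((1 / (N : ℝ≥0∞)) ^ n * (M * ENNReal.ofReal (2 * r))) := by
  have hsub : S ⊆ ⋃ w ∈ stripWords c b u v d n z, S ∩ seqTake n ⁻¹' {w} := fun i hi =>
    mem_iUnion₂.2 ⟨seqTake n i, mem_stripWords.2 (hSz i hi), hi, rfl⟩
  refine (measure_mono hsub).trans <| (measure_biUnion_finset_le _ _).trans ?_
  rw [← nsmul_eq_mul]
  exact Finset.sum_le_card_nsmul _ _ _ fun w _ => hPi.measure_le_of_abs_fst_sub_le hμ hc hφ hφμ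
    (fun i hi => hi.2) (fun i hi => hSφ i hi.1) fun i hi => hSx i hi.1

lemma volume_range_fst_ne_zero (hPi : IsNaturalProjection c b u v d Pi)
    (hμ : IsUniformBernoulli N μ)
    (hφμ : μ.map (fun i => (Pi i).1) = volume.withDensity φ) :
    volume (range fun i => (Pi i).1) ≠ 0 := by
  have := hμ.1
  intro hvol
  have hnull := withDensity_absolutelyContinuous volume φ hvol
  have hle := Measure.le_map_apply hPi.measurable.fst.aemeasurable (μ := μ)
    (range fun i => (Pi i).1)
  rw [hφμ, hnull, preimage_range, measure_univ] at hle
  exact one_ne_zero (nonpos_iff_eq_zero.1 hle)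

lemma measure_regularSet_inter_closedBall_le (hPi : IsNaturalProjection c b u v d Pi)
    (hμ : IsUniformBernoulli N μ) (hb : 0 < b) (hbc : b ≤ c) (hN : N ≠ 0) (hφ : Measurable φ)
    (hφμ : μ.map (fun i => (Pi i).1) = volume.withDensity φ) {K : ℝ} (hK0 : 0 ≤ K)
    (hK : ∀ w, |shear c b d w| ≤ K * c ^ w.length) {h η t : ℝ} (h0 : 0 ≤ h) (hη : 0 < η)
    (hηt : η ^ 3 * (η * b) ^ t * (N * c) = b) {n₀ n : ℕ} (hn : n₀ ≤ n) {i : ℕ → Fin N}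
    (hi : i ∈ regularSet c b u v d Pi φ h η n₀) :
    μ (regularSet c b u v d Pi φ h η n₀ ∩
        Pi ⁻¹' Metric.closedBall (Pi i) (h / (1 + K) * (η * b) ^ n)) ≤
      ENNReal.ofReal (2 * (h / (1 + K))) * ENNReal.ofReal ((η * b) ^ n) ^ t := by
  have hc : 0 < c := hb.trans_le hbc
  set a := h / (1 + K) with ha
  set ψ := η * b with hψ
  have ha0 : 0 ≤ a := by positivity
  have hcount := hPi.measure_le_card_stripWords_mul hμ hc hφ hφμ (n := n) (z := Pi i)
    (M := ENNReal.ofReal η⁻¹ ^ n) (r := a * (ψ / c) ^ n)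
    (S := regularSet c b u v d Pi φ h η n₀ ∩ Pi ⁻¹' Metric.closedBall (Pi i) (a * ψ ^ n))
    (fun j hj => ?_) (fun j hj => (hj.1 n hn).2.1) fun j hj => ?_
  · refine (hcount.trans ?_).trans_eq (ofReal_inv_pow_mul_eq hb hc hN ha0 hη hηt n)
    gcongr
    exact (hi n hn).2.2
  · have hdist : dist (Pi i) (Pi j) ≤ a * ψ ^ n := dist_comm (Pi j) (Pi i) ▸ hj.2
    refine mem_strip_of_dist_le_of_mem_innerSq hb hbc hK0 (hK _) (hj.1 n hn).1 ?_
    rw [← hPi.eq_Sword n j, List.length_ofFn, mul_assoc, ← mul_pow, ← hψ]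
    refine (mul_le_mul_of_nonneg_left hdist (by positivity)).trans_eq ?_
    rw [ha]
    field_simp
  · rw [mul_left_comm, ← mul_pow, mul_div_cancel₀ _ hc.ne', ← Real.dist_eq]
    exact (le_max_left _ _).trans hj.2

end IsNaturalProjection

namespace TransversalWith

variable {c₃ : ℝ}

lemma exists_measure_regularSet_ne_zero (htr : TransversalWith c b u v d c₃)
    (hPi : IsNaturalProjection c b u v d Pi) (hμ : IsUniformBernoulli N μ) (hb : 0 < b)
    (hbc : b < c) (hc : c < 1) (hNb : N * b < 1) (hNc : 1 < N * c) (hc₃ : 0 ≤ c₃)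
    (hφ : Measurable φ) (hφμ : μ.map (fun i => (Pi i).1) = volume.withDensity φ) {q : ℝ}
    (hq : 1 < q) (hφq : ∫⁻ x, φ x ^ q < ⊤) {η : ℝ} (hη0 : 0 < η) (hη1 : η < 1) :
    ∃ h > 0, ∃ n₀, μ (regularSet c b u v d Pi φ h η n₀) ≠ 0 := by
  have := hμ.1
  have hvol := hPi.volume_range_fst_ne_zero hμ hφμ
  obtain ⟨i₀, hi₀⟩ := hPi.exists_mem_Ioo_prod_Ioo hb (hb.trans hbc) hvol
    (htr.not_invariant_line hPi hb.le hbc hc hNb hNc hvol (left_mem_Icc.2 zero_le_one))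
    (htr.not_invariant_line hPi hb.le hbc hc hNb hNc hvol (right_mem_Icc.2 zero_le_one))
  obtain ⟨m, w, h, h0, hw⟩ := hPi.exists_strip_subset_innerSq hb.le hbc hc hi₀
  have hτ1 : 1 < ENNReal.ofReal η⁻¹ := ENNReal.one_lt_ofReal.2 ((one_lt_inv₀ hη0).2 hη1)
  refine ⟨h, h0, ?_⟩
  by_contra! hnull
  have hmem : ∀ᵐ i ∂μ, i ∈ ⋃ n₀, regularSet c b u v d Pi φ h η n₀ := by
    filter_upwards [hPi.ae_eventually_mem_innerSq hμ hb (hbc.trans hc).le hbc.le h0.le hw hη0.le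
        hη1,
      ae_eventually_mem_boundedDensitySet hPi.measurable hμ (hb.trans hbc) hφ hφμ hq hφq hτ1
        ENNReal.ofReal_ne_top,
      htr.ae_eventually_card_stripWords_le hPi hμ hb hNb (hb.trans hbc) hc₃ hφ hφμ hq hφq hτ1
        ENNReal.ofReal_ne_top] with i hinner hdens hcard
    obtain ⟨n₀, hn₀⟩ := eventually_atTop.1 (hinner.and (hdens.and hcard))
    exact mem_iUnion.2 ⟨n₀, fun n hn =>
      ⟨(hn₀ n hn).1, (hn₀ n hn).2.1.1, (hn₀ n hn).2.2⟩⟩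
  have hnotMem := measure_eq_zero_iff_ae_notMem.1 (measure_iUnion_null hnull)
  obtain ⟨i, hi, hi'⟩ := (hmem.and hnotMem).exists
  exact hi' hi

lemma hausdorffMeasure_ne_zero (htr : TransversalWith c b u v d c₃)
    (hPi : IsNaturalProjection c b u v d Pi) (hμ : IsUniformBernoulli N μ) (hb : 0 < b)
    (hbc : b < c) (hc : c < 1) (hNb : N * b < 1) (hNc : 1 < N * c) (hc₃ : 0 ≤ c₃)
    (hφ : Measurable φ) (hφμ : μ.map (fun i => (Pi i).1) = volume.withDensity φ) {q : ℝ}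
    (hq : 1 < q) (hφq : ∫⁻ x, φ x ^ q < ⊤) {t : ℝ} (ht : 0 < t) (hts : t < affinityDim N b c)
    {A : Set (ℝ × ℝ)} (hA : μ.map Pi Aᶜ = 0) : μH[t] A ≠ 0 := by
  intro hA0
  obtain ⟨η, hη0, hη1, hηt⟩ :=
    exists_pow_three_mul_rpow_mul_eq hb (hbc.trans hc) (one_pos.trans hNc) ht.le hts
  obtain ⟨h, h0, n₀, hG⟩ := htr.exists_measure_regularSet_ne_zero hPi hμ hb hbc hc hNb hNc hc₃
    hφ hφμ hq hφq hη0 hη1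
  obtain ⟨K, hK0, hK⟩ := exists_abs_shear_le hb.le hbc d
  set G := regularSet c b u v d Pi φ h η n₀
  have hN : N ≠ 0 := by
    rintro rfl
    simp [zero_lt_one.not_gt] at hNc
  have hψ1 : η * b < 1 := mul_lt_one_of_nonneg_of_lt_one_left hη0.le hη1 (hbc.trans hc).le
  have hball (i) (hi : i ∈ G) (r : ℝ) (hr0 : 0 ≤ r) (hr : r ≤ h / (1 + K) * (η * b) ^ n₀) :=
    le_mul_rpow_of_le_on_geometric (F := fun r => μ (G ∩ Pi ⁻¹' Metric.closedBall (Pi i) r))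
      (fun r s hrs => measure_mono <| inter_subset_inter_right _ <| preimage_mono <|
        Metric.closedBall_subset_closedBall hrs)
      (by positivity) (mul_pos hη0 hb) hψ1 ht ENNReal.ofReal_ne_top
      (fun n hn => hPi.measure_regularSet_inter_closedBall_le hμ hb hbc.le hN hφ hφμ hK0.le hK
        h0.le hη0 hηt hn hi) hr0 hr
  have hGA := measure_inter_preimage_eq_zero_of_hausdorffMeasure_eq_zero hPi.measurable
    (ENNReal.mul_ne_top ENNReal.ofReal_ne_top
      (ENNReal.rpow_ne_top_of_nonneg ht.le ENNReal.ofReal_ne_top)) (by positivity) hball hA0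
  have hGAc : μ (G ∩ Pi ⁻¹' Aᶜ) = 0 := measure_mono_null inter_subset_right <|
    nonpos_iff_eq_zero.1 ((Measure.le_map_apply hPi.measurable.aemeasurable _).trans_eq hA)
  refine hG (measure_mono_null ?_ (measure_union_null hGA hGAc))
  rw [← inter_union_distrib_left, ← preimage_union, union_compl_self, preimage_univ, inter_univ]

lemma affinityDim_le_measureDimH (htr : TransversalWith c b u v d c₃)
    (hPi : IsNaturalProjection c b u v d Pi) (hμ : IsUniformBernoulli N μ) (hb : 0 < b)
    (hbc : b < c) (hc : c < 1) (hNb : N * b < 1) (hNc : 1 < N * c) (hc₃ : 0 ≤ c₃) {q : ℝ}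
    (hq : 1 < q) (hdens : HasLqDensity (μ.map fun i => (Pi i).1) q) :
    ENNReal.ofReal (affinityDim N b c) ≤ measureDimH (μ.map Pi) := by
  obtain ⟨φ, hφ, hφμ, hφq⟩ := hdens.exists_measurable (zero_le_one.trans hq.le)
  refine le_iInf₂ fun A hA => le_of_forall_lt fun s hs => ?_
  obtain ⟨t, hst, ht⟩ := ENNReal.lt_iff_exists_nnreal_btwn.1 hs
  have ht0 : (0 : ℝ) < t := NNReal.coe_pos.2 (ENNReal.coe_pos.1 (zero_le.trans_lt hst))
  rw [← ENNReal.ofReal_coe_nnreal, ENNReal.ofReal_lt_ofReal_iff_of_nonneg t.coe_nonneg] at ht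
  exact hst.trans_le <| le_dimH_of_hausdorffMeasure_ne_zero <|
    htr.hausdorffMeasure_ne_zero hPi hμ hb hbc hc hNb hNc hc₃ hφ hφμ hq hφq ht0 ht hA

end TransversalWith

end LowerBound

lemma measureDimH_map_le_dimH_range {Ω X : Type*} [MeasurableSpace Ω] [EMetricSpace X]
    [MeasurableSpace X] {μ : Measure Ω} {f : Ω → X} (hf : Measurable f)
    (hrange : MeasurableSet (range f)) : measureDimH (μ.map f) ≤ dimH (range f) := by
  refine iInf₂_le _ ?_
  rw [Measure.map_apply hf hrange.compl, preimage_compl, preimage_range, compl_univ, measure_empty]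

/-- under Assumption A, `dim_H Λ = dim_H ν = 1 + log(Nc)/(-log b)`. -/
theorem statement3 (N : ℕ) (hN : 2 ≤ N) (b c : ℝ)
    (hb0 : 0 < b) (hb1 : b < 1) (hc0 : 0 < c) (hc1 : c < 1)
    (u v d : Fin N → ℝ)
    (hmaps : ∀ i, Smap c b u v d i '' unitSq ⊆ unitSq)
    (Pi : (ℕ → Fin N) → ℝ × ℝ)
    (hPi : ∀ i, Tendsto (fun n => Sword c b u v d (prefixWord i n) 0) atTop (nhds (Pi i)))
    (μ : Measure (ℕ → Fin N)) (hμ : IsUniformBernoulli N μ)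
    (ν : Measure (ℝ × ℝ)) (hν : ν = μ.map Pi)
    (νx : Measure ℝ) (hνx : νx = ν.map Prod.fst)
    (hA1 : 1 / (N : ℝ) < c) (hA2 : b < 1 / (N : ℝ))
    (hA3 : ∃ q > (1 : ℝ), HasLqDensity νx q)
    (hA4 : Transversality N c b u v d) :
    dimH (Set.range Pi) = ENNReal.ofReal (1 + Real.log ((N : ℝ) * c) / (-Real.log b)) ∧
    measureDimH ν = ENNReal.ofReal (1 + Real.log ((N : ℝ) * c) / (-Real.log b)) := by
  subst hν hνx
  have hN0 : (0 : ℝ) < N := by positivity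
  have hNc : 1 < N * c := (div_lt_iff₀' hN0).1 hA1
  have hNb : N * b < 1 := (lt_div_iff₀' hN0).1 hA2
  have hbc : b < c := hA2.trans hA1
  have hproj : IsNaturalProjection c b u v d Pi :=
    ⟨fun i => mapsTo_iff_image_subset.2 (hmaps i), hPi⟩
  obtain ⟨q, hq, hdens⟩ := hA3
  obtain ⟨c₃, hc₃, htr⟩ := hA4
  rw [Measure.map_map measurable_fst hproj.measurable] at hdens
  have hupper := hproj.dimH_range_le hb0 hb1 hbc hNc.le
  have hlower := TransversalWith.affinityDim_le_measureDimH htr hproj hμ hb0 hbc hc1 hNb hNc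
    hc₃.le hq hdens
  have hmiddle : measureDimH (μ.map Pi) ≤ dimH (range Pi) :=
    measureDimH_map_le_dimH_range hproj.measurable
      (isCompact_range (hproj.continuous hb0.le hbc hc1)).measurableSet
  exact ⟨hupper.antisymm (hlower.trans hmiddle), (hmiddle.trans hupper).antisymm hlower⟩

end
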